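/- arXiv:1805.09689 — 2 statements merged into one kernel-verified Lean document; each statement's English description precedes it below -/
import Mathlib

section
/- For every n ≥ 1 with n ≡ 0 (mod 4) or n ≡ 3 (mod 4), the thickness of the complete tripartite graph K_{2,n,n} equals ⌈(n+2)/4⌉. -/
open SimpleGraph

/-- A simple graph is planar if it admits a drawing in the plane: an injective
placement of vertices and, for each edge, an injective continuous arc joining
the images of its endpoints, such that arcs avoid vertex images in their
interiors and distinct arcs meet only at vertex images. -/
def IsPlanar {V : Type*} (G : SimpleGraph V) : Prop :=
  ∃ (f : V → ℝ × ℝ) (γ : G.edgeSet → (Set.Icc (0:ℝ) 1 → ℝ × ℝ)),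
    Function.Injective f ∧
    (∀ e : G.edgeSet, Continuous (γ e)) ∧
    (∀ e : G.edgeSet, ∃ u v : V, (e : Sym2 V) = s(u, v) ∧
      γ e ⟨0, by norm_num⟩ = f u ∧ γ e ⟨1, by norm_num⟩ = f v) ∧
    (∀ e : G.edgeSet, Function.Injective (γ e)) ∧
    (∀ e : G.edgeSet, ∀ t : Set.Icc (0:ℝ) 1, (t : ℝ) ≠ 0 → (t : ℝ) ≠ 1 →
      ∀ v : V, γ e t ≠ f v) ∧
    (∀ e e' : G.edgeSet, e ≠ e' → ∀ s t : Set.Icc (0:ℝ) 1,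
      γ e s = γ e' t → γ e s ∈ Set.range f)

/-- The thickness of a graph: the least `n` such that `G` is the union of `n`
planar subgraphs. -/
noncomputable def thickness {V : Type*} (G : SimpleGraph V) : ℕ :=
  sInf {n : ℕ | ∃ H : Fin n → SimpleGraph V,
    (∀ i, H i ≤ G) ∧ (∀ i, IsPlanar (H i)) ∧ (⨆ i, H i) = G}

/-!
By Euler's formula, `t` triangle-free planar graphs on the `2 * n` vertices of
`K_{n,n} ≤ K_{2,n,n}` have at most `4 * t * (n - 1)` edges, too few to cover all `n ^ 2` if
`4 * t ≤ n + 1`.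

Euler's inequality requires no topology of curves beyond their connectedness. A planar drawing of
`G`, looked at with sufficiently fine pixels, exhibits `G` as a minor of the square lattice. In
the lattice the finite mod 2 cycles are visibly the coboundaries of finite sets of unit squares,
and this algebraic form of duality survives deletions and contractions. Hence `G` has an algebraic
dual, and the rank of its cycle space is less than the number of its faces.

For the upper bound, group the indices into `p` blocks of four. A cube is `K_{4,4}` minus a
perfect matching, and it remains planar if each of four of its faces is filled with vertices
joined to two opposite corners. The `r`-th of `p` such layers has the `r`-th block on its corners
and all other vertices inside its faces, chosen so that any two vertices on different sides from
different blocks are adjacent in the layer of one of them. What is left, the edges at the two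
poles and the perfect matching, lies in one more planar graph, a path with all its vertices joined
to both poles.
-/

section Boundary

variable {V W E M : Type*}

/-- The sum of the values of `φ` at the two members of an unordered pair. -/
def pairSum [AddCommMonoid M] (φ : V → M) : Sym2 V → M :=
  Sym2.lift ⟨fun a b => φ a + φ b, fun _ _ => add_comm _ _⟩

@[simp]
lemma pairSum_mk [AddCommMonoid M] (φ : V → M) (a b : V) : pairSum φ s(a, b) = φ a + φ b := rfl

lemma pairSum_map [AddCommMonoid M] (φ : W → M) (f : V → W) (z : Sym2 V) :
    pairSum φ (z.map f) = pairSum (φ ∘ f) z := by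
  induction z; rfl

/-- The mod 2 boundary map of the multigraph whose edge `e` joins the two members of `ends e`.
Its kernel is the cycle space. -/
noncomputable def boundary (ends : E → Sym2 V) : (E →₀ ZMod 2) →ₗ[ZMod 2] (V →₀ ZMod 2) :=
  Finsupp.linearCombination (ZMod 2) fun e => pairSum (Finsupp.single · 1) (ends e)

lemma boundary_single (ends : E → Sym2 V) (e : E) :
    boundary ends (Finsupp.single e 1) = pairSum (Finsupp.single · 1) (ends e) := by
  simp [boundary]

lemma boundary_map (f : V → W) (ends : E → Sym2 V) (c : E →₀ ZMod 2) :
    boundary (fun e => (ends e).map f) c = Finsupp.mapDomain f (boundary ends c) := by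
  suffices boundary (fun e => (ends e).map f) =
      Finsupp.lmapDomain (ZMod 2) (ZMod 2) f ∘ₗ boundary ends from DFunLike.congr_fun this c
  ext e : 2
  simp only [LinearMap.comp_apply, Finsupp.lsingle_apply, boundary_single,
    Finsupp.lmapDomain_apply]
  induction ends e with
  | _ p q => simp [Finsupp.mapDomain_add, Finsupp.mapDomain_single]

lemma boundary_mapDomain (ι : W → E) (ends : E → Sym2 V) (c : W →₀ ZMod 2) :
    boundary ends (c.mapDomain ι) = boundary (ends ∘ ι) c :=
  Finsupp.linearCombination_mapDomain ..

lemma exists_ne_mem_ends_of_boundary_eq_zero {ends : E → Sym2 V} {c : E →₀ ZMod 2}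
    (hc : boundary ends c = 0) {e : E} (he : e ∈ c.support) (hloop : ¬(ends e).IsDiag) {v : V}
    (hv : v ∈ ends e) : ∃ e' ∈ c.support, e' ≠ e ∧ v ∈ ends e' := by
  by_contra! hother
  have incidence_self : pairSum (Finsupp.single · (1 : ZMod 2)) (ends e) v = 1 := by
    obtain ⟨w, hw⟩ := hv
    have : w ≠ v := by rintro rfl; simp [hw] at hloop
    simp [hw, this]
  have incidence_other {e'} (h : v ∉ ends e') :
      pairSum (Finsupp.single · (1 : ZMod 2)) (ends e') v = 0 := by
    induction hz : ends e' with
    | _ a b =>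
      rw [hz, Sym2.mem_iff, not_or] at h
      simp [Ne.symm h.1, Ne.symm h.2]
  have sum_eq : boundary ends c v = c e := by
    rw [boundary, Finsupp.linearCombination_apply, Finsupp.sum, Finsupp.finsetSum_apply,
      Finset.sum_eq_single_of_mem e he fun e' he' hne => ?_]
    · simp [incidence_self]
    · simp [incidence_other (hother e' he' hne)]
  exact Finsupp.mem_support_iff.mp he (by rw [← sum_eq, hc, Finsupp.zero_apply])

lemma card_add_one_le_finrank_ker_boundary_add_card [Fintype E] [Fintype V] [Nonempty V]
    (ends : E → Sym2 V) :
    Fintype.card E + 1 ≤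
      Module.finrank (ZMod 2) (LinearMap.ker (boundary ends)) + Fintype.card V := by
  let augmentation : (V →₀ ZMod 2) →ₗ[ZMod 2] ZMod 2 :=
    Finsupp.linearCombination (ZMod 2) fun _ => 1
  have range_le : LinearMap.range (boundary ends) ≤ LinearMap.ker augmentation := by
    rw [LinearMap.range_le_ker_iff]
    ext e
    simp only [LinearMap.comp_apply, Finsupp.lsingle_apply, boundary_single]
    induction ends e with
    | _ p q => simp [augmentation, CharTwo.add_self_eq_zero]
  have surjective : Function.Surjective augmentation := fun a =>
    ⟨Finsupp.single (Classical.arbitrary V) a, by simp [augmentation]⟩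
  have nullity_augmentation := augmentation.finrank_range_add_finrank_ker
  have nullity_boundary := (boundary ends).finrank_range_add_finrank_ker
  rw [LinearMap.range_eq_top.mpr surjective, finrank_top, Module.finrank_self,
    Module.finrank_finsupp_self] at nullity_augmentation
  rw [Module.finrank_finsupp_self] at nullity_boundary
  have := Submodule.finrank_mono range_le
  lia

lemma ker_lmapDomain_quotMk_le {R : Type*} [Ring R] {r : V → V → Prop} {N : Submodule R (V →₀ R)}
    (hN : ∀ p q, r p q → Finsupp.single p 1 - Finsupp.single q 1 ∈ N) :
    LinearMap.ker (Finsupp.lmapDomain R R (Quot.mk r)) ≤ N := by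
  have eqv {p q : V} (h : Relation.EqvGen r p q) :
      Finsupp.single p 1 - Finsupp.single q 1 ∈ N := by
    induction h with
    | rel p q h => exact hN p q h
    | refl p => simp
    | symm p q _ ih => simpa using N.neg_mem ih
    | trans p q s _ _ ih₁ ih₂ => simpa using N.add_mem ih₁ ih₂
  let rep : (Quot r →₀ R) →ₗ[R] (V →₀ R) := Finsupp.lmapDomain R R Quot.out
  have sub_rep_mem (x : V →₀ R) : x - rep (Finsupp.lmapDomain R R (Quot.mk r) x) ∈ N := by
    induction x using Finsupp.induction_linear with
    | zero => simp
    | add x y hx hy => simpa only [map_add, add_sub_add_comm] using N.add_mem hx hy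
    | single p a =>
      have := N.smul_mem a (eqv (Quot.eqvGen_exact (Quot.out_eq (Quot.mk r p)).symm))
      simpa [rep, Finsupp.mapDomain_single, smul_sub] using this
  intro x hx
  simpa [LinearMap.mem_ker.mp hx] using sub_rep_mem x

lemma ker_lmapDomain_quotMk (ends : E → Sym2 V) (S : Set E) :
    LinearMap.ker (Finsupp.lmapDomain (ZMod 2) (ZMod 2)
      (Quot.mk fun p q => ∃ e ∈ S, ends e = s(p, q))) =
      (Finsupp.supported (ZMod 2) (ZMod 2) S).map (boundary ends) := by
  apply le_antisymm
  · refine ker_lmapDomain_quotMk_le fun p q ⟨e, he, hpq⟩ =>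
      ⟨Finsupp.single e 1, Finsupp.single_mem_supported _ _ he, ?_⟩
    rw [boundary_single, hpq, pairSum_mk, sub_eq_add_neg, ← Finsupp.single_neg,
      ZMod.neg_eq_self_mod_two]
  · rw [Finsupp.supported_eq_span_single, Submodule.map_span, Submodule.span_le]
    rintro _ ⟨_, ⟨e, he, rfl⟩, rfl⟩
    rw [boundary_single]
    induction h : ends e with
    | _ p q =>
      have : Quot.mk (fun p q => ∃ e ∈ S, ends e = s(p, q)) p = Quot.mk _ q :=
        Quot.sound ⟨e, he, h⟩
      simp [Finsupp.mapDomain_add, Finsupp.mapDomain_single, this, ← Finsupp.single_add,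
        CharTwo.add_self_eq_zero]

end Boundary

section Dual

variable {V W E E' F : Type*} {ends : E → Sym2 V} {sides : E → Sym2 F}

/-- Algebraic duality of the multigraphs given by `ends` and `sides` on a common edge set: the
cycles of the first are the finitely supported coboundaries of the second. The values of `sides`
play the role of the faces of a plane drawing of the first. -/
def IsDual (ends : E → Sym2 V) (sides : E → Sym2 F) : Prop :=
  ∀ c : E →₀ ZMod 2, boundary ends c = 0 ↔ ∃ φ : F → ZMod 2, ∀ e, c e = pairSum φ (sides e)

lemma IsDual.of_map {f : V → W} (hf : Function.Injective f)
    (h : IsDual (fun e => (ends e).map f) sides) : IsDual ends sides := fun c => by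
  rw [← h c, boundary_map, ← Finsupp.mapDomain_zero (f := f),
    (Finsupp.mapDomain_injective hf).eq_iff]

lemma pairSum_quotMk_eq_zero {r : F → F → Prop} (φ : Quot r → ZMod 2) {z : Sym2 F}
    (h : ∀ p q, z = s(p, q) → r p q) : pairSum φ (z.map (Quot.mk r)) = 0 := by
  induction z with
  | _ p q => simp [Quot.sound (h p q rfl), CharTwo.add_self_eq_zero]

/-- Deleting edges of a multigraph merges the faces on their two sides. -/
theorem IsDual.delete (h : IsDual ends sides) (ι : E' ↪ E) :
    IsDual (ends ∘ ι) fun e =>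
      (sides (ι e)).map (Quot.mk fun p q => ∃ e ∈ (Set.range ι)ᶜ, sides e = s(p, q)) := by
  intro c
  have extension_apply (e : E') : c.mapDomain ι (ι e) = c e :=
    Finsupp.mapDomain_apply ι.injective c e
  rw [← boundary_mapDomain, h]
  constructor
  · rintro ⟨φ, hφ⟩
    refine ⟨Quot.lift φ fun p q ⟨e, he, hpq⟩ => ?_, fun e => ?_⟩
    · have := hφ e
      rwa [Finsupp.mapDomain_of_notMem_range _ _ he, hpq, pairSum_mk, eq_comm,
        CharTwo.add_eq_zero] at this
    · rw [pairSum_map, ← extension_apply, hφ]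
      rfl
  · rintro ⟨φ, hφ⟩
    refine ⟨φ ∘ Quot.mk _, fun e => ?_⟩
    rw [← pairSum_map]
    by_cases he : e ∈ Set.range ι
    · obtain ⟨e, rfl⟩ := he
      rw [extension_apply, hφ]
    · rw [Finsupp.mapDomain_of_notMem_range _ _ he,
        pairSum_quotMk_eq_zero φ fun p q hpq => ⟨e, he, hpq⟩]

theorem IsDual.contract (h : IsDual ends sides) (ι : E' ↪ E) (hι : (Set.range ι)ᶜ.Finite) :
    IsDual (fun e =>
      (ends (ι e)).map (Quot.mk fun p q => ∃ e ∈ (Set.range ι)ᶜ, ends e = s(p, q)))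
      (sides ∘ ι) := by
  intro c
  have extension_apply (e : E') : c.mapDomain ι (ι e) = c e :=
    Finsupp.mapDomain_apply ι.injective c e
  have boundary_eq_zero_iff :
      boundary (fun e =>
        (ends (ι e)).map (Quot.mk fun p q => ∃ e ∈ (Set.range ι)ᶜ, ends e = s(p, q))) c = 0 ↔
      ∃ d ∈ Finsupp.supported (ZMod 2) (ZMod 2) (Set.range ι)ᶜ,
        boundary ends d = boundary ends (c.mapDomain ι) := by
    rw [← Submodule.mem_map, ← ker_lmapDomain_quotMk, boundary_mapDomain, LinearMap.mem_ker,
      Finsupp.lmapDomain_apply, ← boundary_map]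
    rfl
  rw [boundary_eq_zero_iff]
  constructor
  · rintro ⟨d, hd, hdc⟩
    obtain ⟨φ, hφ⟩ := (h (c.mapDomain ι - d)).mp (by rw [map_sub, hdc, sub_self])
    refine ⟨φ, fun e => ?_⟩
    have hde : d (ι e) = 0 := (Finsupp.mem_supported' _ _).mp hd _ (by simp)
    rw [Function.comp_apply, ← hφ, Finsupp.sub_apply, extension_apply, hde, sub_zero]
  · rintro ⟨φ, hφ⟩
    have support_subset : (Function.support fun e => pairSum φ (sides e)) ⊆
        ι '' c.support ∪ (Set.range ι)ᶜ := by
      intro e he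
      by_cases hmem : e ∈ Set.range ι
      · obtain ⟨e, rfl⟩ := hmem
        exact .inl ⟨e, by simpa [hφ] using he, rfl⟩
      · exact .inr hmem
    let coboundary := Finsupp.ofSupportFinite _
      (((c.support.finite_toSet.image ι).union hι).subset support_subset)
    refine ⟨c.mapDomain ι - coboundary, (Finsupp.mem_supported' _ _).mpr fun e he => ?_, ?_⟩
    · obtain ⟨e, rfl⟩ := not_not.mp he
      rw [Finsupp.sub_apply, extension_apply, hφ]
      exact sub_self _
    · rw [map_sub, (h coboundary).mpr ⟨φ, fun _ => rfl⟩, sub_zero]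

end Dual

section Count

variable {V E F : Type*} {ends : E → Sym2 V} {sides : E → Sym2 F} [Fintype E] [DecidableEq F]

/-- The faces incident with an edge that has two different faces on its sides. -/
def essentialFaces (sides : E → Sym2 F) : Finset F :=
  ({e | ¬(sides e).IsDiag} : Finset E).biUnion fun e => (sides e).toFinset

lemma mem_essentialFaces {C : F} :
    C ∈ essentialFaces sides ↔ ∃ e, ¬(sides e).IsDiag ∧ C ∈ sides e := by
  simp [essentialFaces]

/-- The mod 2 sum of the edges bounding the face `C`. -/
noncomputable def faceBoundary (sides : E → Sym2 F) (C : F) : E →₀ ZMod 2 :=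
  Finsupp.equivFunOnFinite.symm fun e => pairSum (Pi.single C 1) (sides e)

lemma faceBoundary_apply (C : F) (e : E) :
    faceBoundary sides C e = pairSum (Pi.single C 1) (sides e) := rfl

lemma faceBoundary_eq_one {C : F} {e : E} (he : ¬(sides e).IsDiag) (hC : C ∈ sides e) :
    faceBoundary sides C e = 1 := by
  obtain ⟨D, hD⟩ := hC
  rw [hD, Sym2.mk_isDiag_iff] at he
  simp [faceBoundary_apply, hD, Ne.symm he]

lemma mem_sides_of_faceBoundary_ne_zero {C : F} {e : E} (h : faceBoundary sides C e ≠ 0) :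
    C ∈ sides e := by
  contrapose! h
  rw [faceBoundary_apply]
  induction hz : sides e with
  | _ p q =>
    rw [hz, Sym2.mem_iff, not_or] at h
    simp [Ne.symm h.1, Ne.symm h.2]

lemma sum_mul_faceBoundary (φ : F → ZMod 2) (e : E) :
    ∑ C ∈ essentialFaces sides, φ C * faceBoundary sides C e = pairSum φ (sides e) := by
  simp only [faceBoundary_apply]
  induction hz : sides e with
  | _ p q =>
    by_cases hpq : p = q
    · simp [hpq, CharTwo.add_self_eq_zero]
    · have hdiag : ¬(sides e).IsDiag := by simpa [hz] using hpq
      have hp : p ∈ essentialFaces sides := mem_essentialFaces.mpr ⟨e, hdiag, by simp [hz]⟩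
      have hq : q ∈ essentialFaces sides := mem_essentialFaces.mpr ⟨e, hdiag, by simp [hz]⟩
      simp [mul_add, Finset.sum_add_distrib, Pi.single_apply, hp, hq]

namespace IsDual

lemma boundary_faceBoundary (h : IsDual ends sides) (C : F) :
    boundary ends (faceBoundary sides C) = 0 :=
  (h _).mpr ⟨_, fun _ => rfl⟩

lemma ker_boundary_le_span (h : IsDual ends sides) {C₀ : F} (hC₀ : C₀ ∈ essentialFaces sides) :
    LinearMap.ker (boundary ends) ≤ Submodule.span (ZMod 2)
      (((essentialFaces sides).erase C₀).image (faceBoundary sides) : Finset (E →₀ ZMod 2)) := by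
  intro c hc
  obtain ⟨φ, hφ⟩ := (h c).mp hc
  -- Shifting the potential by a constant does not change its coboundary.
  let ψ C := φ C + φ C₀
  have pairSum_ψ (z : Sym2 F) : pairSum ψ z = pairSum φ z := by
    induction z with
    | _ p q =>
      rw [pairSum_mk, add_add_add_comm, CharTwo.add_self_eq_zero, add_zero, pairSum_mk]
  have c_eq : c = ∑ C ∈ (essentialFaces sides).erase C₀, ψ C • faceBoundary sides C := by
    ext e
    rw [hφ, ← pairSum_ψ, ← sum_mul_faceBoundary, ← Finset.add_sum_erase _ _ hC₀]
    simp [ψ, CharTwo.add_self_eq_zero, Finsupp.finsetSum_apply]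
  rw [c_eq]
  exact Submodule.sum_mem _ fun C hC =>
    Submodule.smul_mem _ _ (Submodule.subset_span (Finset.mem_image_of_mem _ hC))

lemma finrank_ker_boundary_lt (h : IsDual ends sides) (hne : (essentialFaces sides).Nonempty) :
    Module.finrank (ZMod 2) (LinearMap.ker (boundary ends)) < (essentialFaces sides).card := by
  obtain ⟨C₀, hC₀⟩ := hne
  calc Module.finrank (ZMod 2) (LinearMap.ker (boundary ends))
      ≤ (((essentialFaces sides).erase C₀).image (faceBoundary sides)).card :=
        (Submodule.finrank_mono (h.ker_boundary_le_span hC₀)).trans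
          (finrank_span_finset_le_card _)
    _ ≤ ((essentialFaces sides).erase C₀).card := Finset.card_image_le
    _ < (essentialFaces sides).card := Finset.card_erase_lt_of_mem hC₀

lemma finrank_ker_boundary_eq_zero (h : IsDual ends sides) (hempty : essentialFaces sides = ∅) :
    Module.finrank (ZMod 2) (LinearMap.ker (boundary ends)) = 0 := by
  rw [Submodule.finrank_eq_zero, LinearMap.ker_eq_bot']
  intro c hc
  obtain ⟨φ, hφ⟩ := (h c).mp hc
  ext e
  rw [hφ, ← sum_mul_faceBoundary, hempty, Finset.sum_empty, Finsupp.zero_apply]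

lemma mul_card_essentialFaces_le (h : IsDual ends sides) {g : ℕ}
    (hg : ∀ c : E →₀ ZMod 2, boundary ends c = 0 → c ≠ 0 → g ≤ c.support.card) :
    (essentialFaces sides).card * g ≤ Fintype.card E * 2 := by
  classical
  refine Finset.card_mul_le_card_mul (fun C e => faceBoundary sides C e ≠ 0)
    (t := Finset.univ) (fun C hC => ?_) fun e _ => ?_
  · obtain ⟨e, he, hCe⟩ := mem_essentialFaces.mp hC
    have nonzero : faceBoundary sides C ≠ 0 := fun h0 => by
      simpa [h0] using faceBoundary_eq_one he hCe
    convert hg _ (h.boundary_faceBoundary C) nonzero using 2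
    ext e
    simp [Finset.bipartiteAbove]
  · have subset : (essentialFaces sides).bipartiteBelow (fun C e => faceBoundary sides C e ≠ 0) e ⊆
        (sides e).toFinset := fun C hC =>
      Sym2.mem_toFinset.mpr
        (mem_sides_of_faceBoundary_ne_zero ((Finset.mem_bipartiteBelow _).mp hC).2)
    refine (Finset.card_le_card subset).trans ?_
    rw [Sym2.card_toFinset]
    split_ifs <;> simp

theorem mul_card_add_two_le [Fintype V] [Nonempty V] (h : IsDual ends sides) {g : ℕ}
    (hne : (essentialFaces sides).Nonempty)
    (hg : ∀ c : E →₀ ZMod 2, boundary ends c = 0 → c ≠ 0 → g ≤ c.support.card) :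
    g * (Fintype.card E + 2) ≤ g * Fintype.card V + 2 * Fintype.card E := by
  have euler := card_add_one_le_finrank_ker_boundary_add_card ends
  have rank := h.finrank_ker_boundary_lt hne
  have faces := h.mul_card_essentialFaces_le hg
  calc g * (Fintype.card E + 2)
      ≤ g * ((essentialFaces sides).card + Fintype.card V) :=
        Nat.mul_le_mul_left g (by lia)
    _ ≤ g * Fintype.card V + 2 * Fintype.card E := by linarith

end IsDual

end Count

section Girth

variable {V : Type*} {G : SimpleGraph V}

theorem four_le_card_support_of_boundary_eq_zero (hG : G.CliqueFree 3) {c : G.edgeSet →₀ ZMod 2}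
    (hc : boundary (fun e : G.edgeSet => (e : Sym2 V)) c = 0) (hne : c ≠ 0) :
    4 ≤ c.support.card := by
  classical
  let S : Finset (Sym2 V) := c.support.map (Function.Embedding.subtype _)
  have adj {u v : V} (h : s(u, v) ∈ S) : G.Adj u v := by
    obtain ⟨e, -, he⟩ := Finset.mem_map.mp h
    rw [← mem_edgeSet, ← show (e : Sym2 V) = s(u, v) from he]
    exact e.2
  have exists_next {u v : V} (h : s(u, v) ∈ S) : ∃ w ≠ v, s(u, w) ∈ S := by
    obtain ⟨e, he, heq⟩ := Finset.mem_map.mp h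
    obtain ⟨e', he', hne, w, hw⟩ := exists_ne_mem_ends_of_boundary_eq_zero (v := u) hc he
      (G.not_isDiag_of_mem_edgeSet e.2) (by simp [show (e : Sym2 V) = s(u, v) from heq])
    refine ⟨w, ?_, Finset.mem_map.mpr ⟨e', he', hw⟩⟩
    rintro rfl
    exact hne (Subtype.ext (hw.trans heq.symm))
  obtain ⟨e, he⟩ := Finsupp.support_nonempty_iff.mpr hne
  obtain ⟨u, v, huv⟩ : ∃ u v, s(u, v) ∈ S := by
    induction hz : (e : Sym2 V) with
    | _ u v => exact ⟨u, v, Finset.mem_map.mpr ⟨e, he, hz⟩⟩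
  obtain ⟨a, hav, hua⟩ := exists_next huv
  obtain ⟨b, hbu, hvb⟩ := exists_next (Sym2.eq_swap ▸ huv)
  obtain ⟨w, hwu, haw⟩ := exists_next (Sym2.eq_swap ▸ hua)
  have hab : a ≠ b := by
    rintro rfl
    exact hG _ (is3Clique_triple_iff.mpr ⟨adj huv, adj hua, adj hvb⟩)
  have := (adj huv).ne
  have := (adj hua).ne
  have := (adj hvb).ne
  calc 4 = ({s(u, v), s(u, a), s(v, b), s(a, w)} : Finset (Sym2 V)).card := by
        grind [Finset.card_insert_of_notMem, Finset.card_singleton, Sym2.eq_iff]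
    _ ≤ S.card := Finset.card_le_card (by simp [Finset.insert_subset_iff, huv, hua, hvb, haw])
    _ = c.support.card := Finset.card_map _

end Girth

section Grid

/-- The edges of the square lattice `ℤ × ℤ`, each named after its left or lower end. -/
inductive GridEdge
  | horizontal (i j : ℤ)
  | vertical (i j : ℤ)

/-- The two lattice points joined by an edge of the square lattice. -/
def gridEnds : GridEdge → Sym2 (ℤ × ℤ)
  | .horizontal i j => s((i, j), (i + 1, j))
  | .vertical i j => s((i, j), (i, j + 1))

/-- The two unit squares separated by an edge of the square lattice, each named after its lower
left corner. -/
def gridSides : GridEdge → Sym2 (ℤ × ℤ)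
  | .horizontal i j => s((i, j), (i, j - 1))
  | .vertical i j => s((i, j), (i - 1, j))

/-- The square lattice graph. -/
def grid : SimpleGraph (ℤ × ℤ) := fromEdgeSet (Set.range gridEnds)

lemma gridEnds_injective : Function.Injective gridEnds := by
  rintro (⟨i, j⟩ | ⟨i, j⟩) (⟨i', j'⟩ | ⟨i', j'⟩) h <;>
    simp only [gridEnds, Sym2.eq_iff, Prod.mk.injEq, GridEdge.horizontal.injEq,
      GridEdge.vertical.injEq, reduceCtorEq] at h ⊢ <;> lia

lemma grid_adj_horizontal (i j : ℤ) : grid.Adj (i, j) (i + 1, j) :=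
  (fromEdgeSet_adj _).mpr ⟨⟨.horizontal i j, rfl⟩, by simp⟩

lemma grid_adj_vertical (i j : ℤ) : grid.Adj (i, j) (i, j + 1) :=
  (fromEdgeSet_adj _).mpr ⟨⟨.vertical i j, rfl⟩, by simp⟩

lemma boundary_gridEnds_apply (c : GridEdge →₀ ZMod 2) (i j : ℤ) :
    boundary gridEnds c (i, j) =
      c (.horizontal i j) + c (.horizontal (i - 1) j) +
        (c (.vertical i j) + c (.vertical i (j - 1))) := by
  induction c using Finsupp.induction_linear with
  | zero => simp
  | add c d hc hd => simp only [map_add, Finsupp.add_apply, hc, hd]; ring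
  | single e a =>
    classical
    rw [← mul_one a, ← smul_eq_mul, ← Finsupp.smul_single, map_smul, boundary_single]
    rcases e with ⟨k, l⟩ | ⟨k, l⟩ <;>
      simp [gridEnds, Finsupp.single_apply, Prod.mk.injEq, eq_sub_iff_add_eq]

lemma boundary_gridEnds_eq_zero_iff (c : GridEdge →₀ ZMod 2) : boundary gridEnds c = 0 ↔
    ∀ i j, c (.horizontal i j) + c (.horizontal (i - 1) j) =
      c (.vertical i j) + c (.vertical i (j - 1)) := by
  simp only [Finsupp.ext_iff, Prod.forall, boundary_gridEnds_apply, Finsupp.zero_apply,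
    CharTwo.add_eq_zero]

lemma exists_forall_lt_eq_zero (c : GridEdge →₀ ZMod 2) :
    ∃ M : ℤ, ∀ i, ∀ j < M, c (.horizontal i j) = 0 ∧ c (.vertical i j) = 0 := by
  classical
  let height : GridEdge → ℤ := fun | .horizontal _ j => j | .vertical _ j => j
  obtain ⟨M, hM⟩ := (c.support.image height).bddBelow
  have vanish (e : GridEdge) (he : height e < M) : c e = 0 := by
    by_contra h
    exact he.not_ge (hM (Finset.mem_coe.mpr
      (Finset.mem_image_of_mem _ (Finsupp.mem_support_iff.mpr h))))
  exact ⟨M, fun i j hj => ⟨vanish (.horizontal i j) hj, vanish (.vertical i j) hj⟩⟩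

theorem isDual_grid : IsDual gridEnds gridSides := by
  intro c
  rw [boundary_gridEnds_eq_zero_iff]
  constructor
  · intro hc
    obtain ⟨M, hM⟩ := exists_forall_lt_eq_zero c
    let φ (p : ℤ × ℤ) : ZMod 2 := ∑ k ∈ Finset.Ico M (p.2 + 1), c (.horizontal p.1 k)
    have φ_below (i : ℤ) {j : ℤ} (hj : j < M) : φ (i, j) = 0 := by
      simp only [φ, Finset.Ico_eq_empty (show ¬M < j + 1 by lia), Finset.sum_empty]
    have horizontal_eq (i j : ℤ) : c (.horizontal i j) = φ (i, j) + φ (i, j - 1) := by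
      rcases lt_or_ge j M with hj | hj
      · rw [φ_below i hj, φ_below i (by lia), (hM i j hj).1, add_zero]
      · have : φ (i, j) = φ (i, j - 1) + c (.horizontal i j) := by
          simp only [φ, sub_add_cancel]
          rw [← Finset.insert_Ico_right_eq_Ico_add_one hj, Finset.sum_insert (by simp), add_comm]
        rw [this, add_comm (φ (i, j - 1)), add_assoc, CharTwo.add_self_eq_zero, add_zero]
    have vertical_below (i : ℤ) {j : ℤ} (hj : j < M) :
        c (.vertical i j) = φ (i, j) + φ (i - 1, j) := by
      rw [φ_below i hj, φ_below (i - 1) hj, (hM i j hj).2, add_zero]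
    have vertical_eq (i j : ℤ) : c (.vertical i j) = φ (i, j) + φ (i - 1, j) := by
      obtain hj | hj := le_total j (M - 1)
      · exact vertical_below i (by lia)
      induction j, hj using Int.leInduction with
      | base => exact vertical_below i (by lia)
      | succ j _ ih =>
        have cycle := hc i (j + 1)
        have right := horizontal_eq i (j + 1)
        have left := horizontal_eq (i - 1) (j + 1)
        rw [add_sub_cancel_right] at cycle right left
        grind
    refine ⟨φ, ?_⟩
    rintro (⟨i, j⟩ | ⟨i, j⟩)
    exacts [horizontal_eq i j, vertical_eq i j]
  · rintro ⟨φ, hφ⟩ i j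
    simp only [hφ, gridSides, pairSum_mk]
    ring

end Grid

section Minor

/-- A model of `G` as a minor of `H`: disjoint finite connected vertex sets of `H`, one for each
vertex of `G`, such that adjacent vertices of `G` have adjacent vertex sets. -/
structure MinorModel {V W : Type*} (G : SimpleGraph V) (H : SimpleGraph W) where
  branch : V → Set W
  finite : ∀ v, (branch v).Finite
  connected : ∀ v, (H.induce (branch v)).Connected
  disjoint : Pairwise fun u v => Disjoint (branch u) (branch v)
  exists_adj : ∀ {u v}, G.Adj u v → ∃ x ∈ branch u, ∃ y ∈ branch v, H.Adj x y

namespace MinorModel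

variable {V W E F : Type*} {G : SimpleGraph V} {H : SimpleGraph W} {ends : E → Sym2 W}
  {sides : E → Sym2 F}

lemma eq_of_mem (M : MinorModel G H) {u v : V} {x : W} (hu : x ∈ M.branch u)
    (hv : x ∈ M.branch v) : u = v := by
  by_contra h
  exact Set.disjoint_left.mp (M.disjoint h) hu hv

/-- The edges inside the branch sets, which are to be contracted. -/
def innerEdges (M : MinorModel G H) (ends : E → Sym2 W) : Set E :=
  {e | ∃ v, ∀ x ∈ ends e, x ∈ M.branch v}

lemma finite_innerEdges [Finite V] (M : MinorModel G H) (hends : Function.Injective ends) :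
    (M.innerEdges ends).Finite := by
  refine .subset (.preimage hends.injOn
    (Set.finite_iUnion fun v => ((M.finite v).prod (M.finite v)).image fun p => s(p.1, p.2)))
    fun e ⟨v, hv⟩ => Set.mem_iUnion.mpr ⟨v, ?_⟩
  induction hz : ends e with
  | _ x y => exact ⟨(x, y), ⟨hv x (by simp [hz]), hv y (by simp [hz])⟩, rfl⟩

/-- The relation that identifies the two ends of every inner edge. -/
def Contracts (M : MinorModel G H) (ends : E → Sym2 W) (x y : W) : Prop :=
  ∃ e ∈ M.innerEdges ends, ends e = s(x, y)

lemma mem_branch_iff_of_contracts (M : MinorModel G H) {x y : W} (h : M.Contracts ends x y)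
    (v : V) : x ∈ M.branch v ↔ y ∈ M.branch v := by
  obtain ⟨e, ⟨u, hu⟩, he⟩ := h
  have hx : x ∈ M.branch u := hu x (by simp [he])
  have hy : y ∈ M.branch u := hu y (by simp [he])
  exact ⟨fun h => M.eq_of_mem hx h ▸ hy, fun h => M.eq_of_mem hy h ▸ hx⟩

lemma eq_of_quotMk_eq (M : MinorModel G H) {u v : V} {x y : W} (hx : x ∈ M.branch u)
    (hy : y ∈ M.branch v) (h : Quot.mk (M.Contracts ends) x = Quot.mk _ y) : u = v := by
  let inBranch : Quot (M.Contracts ends) → Prop :=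
    Quot.lift (· ∈ M.branch u) fun _ _ h => propext (M.mem_branch_iff_of_contracts h u)
  have hyu : inBranch (Quot.mk _ y) := h ▸ hx
  exact M.eq_of_mem hyu hy

lemma quotMk_eq_of_mem (M : MinorModel G (fromEdgeSet (Set.range ends))) {v : V} {x y : W}
    (hx : x ∈ M.branch v) (hy : y ∈ M.branch v) : Quot.mk (M.Contracts ends) x = Quot.mk _ y := by
  obtain ⟨p⟩ := (M.connected v).preconnected ⟨x, hx⟩ ⟨y, hy⟩
  suffices ∀ {a b : M.branch v}, ((fromEdgeSet (Set.range ends)).induce (M.branch v)).Walk a b →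
      Quot.mk (M.Contracts ends) a = Quot.mk (M.Contracts ends) b from this p
  intro a b p
  induction p with
  | nil => rfl
  | cons hadj _ ih =>
    obtain ⟨⟨e, he⟩, -⟩ := (fromEdgeSet_adj _).mp (comap_adj.mp hadj)
    exact (Quot.sound ⟨e, ⟨v, by simp [he]⟩, he⟩).trans ih

lemma exists_link (M : MinorModel G (fromEdgeSet (Set.range ends))) (g : G.edgeSet) :
    ∃ e u v x y, (g : Sym2 V) = s(u, v) ∧ ends e = s(x, y) ∧ x ∈ M.branch u ∧ y ∈ M.branch v := by
  obtain ⟨⟨u, v⟩, huv⟩ := g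
  obtain ⟨x, hx, y, hy, hadj⟩ := M.exists_adj huv
  obtain ⟨⟨e, he⟩, -⟩ := (fromEdgeSet_adj _).mp hadj
  exact ⟨e, u, v, x, y, rfl, he, hx, hy⟩

lemma exists_link_embedding (M : MinorModel G (fromEdgeSet (Set.range ends))) :
    ∃ link : G.edgeSet ↪ E, (∀ g, link g ∉ M.innerEdges ends) ∧
      ∀ root : V → W, (∀ v, root v ∈ M.branch v) → ∀ g : G.edgeSet,
        (ends (link g)).map (Quot.mk (M.Contracts ends)) =
          (g : Sym2 V).map fun v => Quot.mk (M.Contracts ends) (root v) := by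
  choose link u v x y huv hxy hx hy using M.exists_link
  have link_injective : Function.Injective link := fun g g' hgg' => by
    rw [Subtype.ext_iff, huv g, huv g']
    rcases Sym2.eq_iff.mp ((hxy g).symm.trans (hgg' ▸ hxy g')) with ⟨hxx, hyy⟩ | ⟨hxy, hyx⟩
    · rw [M.eq_of_mem (hx g) (hxx ▸ hx g'), M.eq_of_mem (hy g) (hyy ▸ hy g')]
    · rw [M.eq_of_mem (hx g) (hxy ▸ hy g'), M.eq_of_mem (hy g) (hyx ▸ hx g'), Sym2.eq_swap]
  refine ⟨⟨link, link_injective⟩, fun g ⟨w, hw⟩ => ?_, fun root hroot g => ?_⟩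
  · apply G.not_isDiag_of_mem_edgeSet g.2
    rw [huv, Sym2.mk_isDiag_iff, M.eq_of_mem (hx g) (hw _ (by simp [hxy])),
      M.eq_of_mem (hy g) (hw _ (by simp [hxy]))]
  · rw [Function.Embedding.coeFn_mk, hxy, huv, Sym2.map_mk, Sym2.map_mk,
      M.quotMk_eq_of_mem (hx g) (hroot _), M.quotMk_eq_of_mem (hy g) (hroot _)]

/-- Delete the edges that are neither inside a branch set nor chosen to represent an edge, then
contract the branch sets. -/
theorem exists_isDual [Finite V] (M : MinorModel G (fromEdgeSet (Set.range ends)))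
    (hends : Function.Injective ends) (h : IsDual ends sides) :
    ∃ (r : F → F → Prop) (sides' : G.edgeSet → Sym2 (Quot r)),
      IsDual (fun g : G.edgeSet => (g : Sym2 V)) sides' := by
  obtain ⟨link, link_notMem, map_link⟩ := M.exists_link_embedding
  choose root hroot using fun v => Set.nonempty_coe_sort.mp (M.connected v).nonempty
  let kept : G.edgeSet ⊕ M.innerEdges ends ↪ E :=
    ⟨Sum.elim link (↑), link.injective.sumElim Subtype.val_injective
      fun g e => (ne_of_mem_of_not_mem e.2 (link_notMem g)).symm⟩
  let outer : G.edgeSet ↪ G.edgeSet ⊕ M.innerEdges ends := .inl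
  have compl_range_outer : (Set.range outer)ᶜ = Set.range Sum.inr := Set.compl_range_inl
  have := (M.finite_innerEdges hends).to_subtype
  have contracted := (h.delete kept).contract outer (compl_range_outer ▸ Set.finite_range _)
  have contracts_eq : (fun p q => ∃ e ∈ (Set.range outer)ᶜ, (ends ∘ kept) e = s(p, q)) =
      M.Contracts ends := by
    ext p q
    simp [compl_range_outer, Contracts, kept]
  have ends_eq : (fun g => ((ends ∘ kept) (outer g)).map (Quot.mk (M.Contracts ends))) =
      fun g : G.edgeSet => (g : Sym2 V).map fun v => Quot.mk (M.Contracts ends) (root v) :=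
    funext (map_link root hroot)
  rw [contracts_eq, ends_eq] at contracted
  exact ⟨_, _, contracted.of_map fun u v => M.eq_of_quotMk_eq (hroot u) (hroot v)⟩

end MinorModel

end Minor

section CellDrawing

variable {V W : Type*} {G : SimpleGraph V} {H : SimpleGraph W}

lemma exists_walk_until_adj {P S : Set W} (hP : (H.induce P).Preconnected) {p q : W} (hp : p ∈ P)
    (hpS : p ∉ S) (hq : q ∈ P) (hqS : q ∈ S) :
    ∃ x, ∃ w : H.Walk p x, (∀ z ∈ w.support, z ∈ P ∧ z ∉ S) ∧ ∃ y ∈ S, H.Adj x y := by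
  obtain ⟨w⟩ := hP ⟨p, hp⟩ ⟨q, hq⟩
  suffices ∀ {a b : P}, (H.induce P).Walk a b → (a : W) ∉ S → (b : W) ∈ S →
      ∃ x, ∃ w : H.Walk a x, (∀ z ∈ w.support, z ∈ P ∧ z ∉ S) ∧ ∃ y ∈ S, H.Adj x y from
    this w hpS hqS
  intro a b w ha hb
  induction w with
  | nil => exact absurd hb ha
  | @cons a c _ hadj _ ih =>
    have hac : H.Adj a c := comap_adj.mp hadj
    by_cases hc : (c : W) ∈ S
    · exact ⟨a, .nil, by simpa [a.2] using ha, c, hc, hac⟩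
    · obtain ⟨x, w, hw, hx⟩ := ih hc hb
      exact ⟨x, .cons hac w, List.forall_mem_cons.mpr ⟨⟨a.2, ha⟩, hw⟩, hx⟩

lemma connected_induce_union_iUnion {ι : Type*} {s : Set W} {t : ι → Set W}
    (hs : (H.induce s).Connected) (ht : ∀ i, (H.induce (t i)).Connected)
    (hst : ∀ i, (s ∩ t i).Nonempty) : (H.induce (s ∪ ⋃ i, t i)).Connected := by
  obtain ⟨u, hu⟩ := Set.nonempty_coe_sort.mp hs.nonempty
  refine H.induce_connected_of_patches u (.inl hu) fun {v} hv => ?_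
  rcases hv with hv | hv
  · exact ⟨s, Set.subset_union_left, hu, hv, hs.preconnected _ _⟩
  · obtain ⟨i, hi⟩ := Set.mem_iUnion.mp hv
    exact ⟨s ∪ t i, Set.union_subset_union_right s (Set.subset_iUnion t i), .inl hu, .inr hi,
      induce_union_connected hs.preconnected (ht i).preconnected (hst i) _ _⟩

/-- A drawing of `G` in the graph `H` with vertices thickened to cells, so that different edges meet
only inside cells. Edges may cross the cells of their ends several times. -/
structure CellDrawing (G : SimpleGraph V) (H : SimpleGraph W) where
  cell : V → Set W
  path : G.edgeSet → Set W
  finite_cell : ∀ v, (cell v).Finite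
  connected_cell : ∀ v, (H.induce (cell v)).Connected
  preconnected_path : ∀ e, (H.induce (path e)).Preconnected
  disjoint_cell : Pairwise fun u v => Disjoint (cell u) (cell v)
  inter_nonempty : ∀ {e : G.edgeSet} {v}, v ∈ (e : Sym2 V) → (path e ∩ cell v).Nonempty
  disjoint_path_cell : ∀ {e : G.edgeSet} {v}, v ∉ (e : Sym2 V) → Disjoint (path e) (cell v)
  path_inter_subset : ∀ {e e'}, e ≠ e' → path e ∩ path e' ⊆ ⋃ v, cell v

namespace CellDrawing

lemma exists_initial_part (D : CellDrawing G H) (e : G.edgeSet) :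
    ∃ tail head : V, (e : Sym2 V) = s(tail, head) ∧ ∃ Q ⊆ D.path e, Q.Finite ∧
      (H.induce Q).Connected ∧ (Q ∩ D.cell tail).Nonempty ∧ Disjoint Q (D.cell head) ∧
      ∃ x ∈ Q, ∃ y ∈ D.cell head, H.Adj x y := by
  obtain ⟨⟨u, v⟩, huv⟩ := e
  obtain ⟨p, hp, hpu⟩ := D.inter_nonempty (e := ⟨s(u, v), huv⟩) (Sym2.mem_mk_left u v)
  obtain ⟨q, hq, hqv⟩ := D.inter_nonempty (e := ⟨s(u, v), huv⟩) (Sym2.mem_mk_right u v)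
  have hpv : p ∉ D.cell v := Set.disjoint_left.mp (D.disjoint_cell huv.ne) hpu
  obtain ⟨x, w, hw, hx⟩ := exists_walk_until_adj (D.preconnected_path _) hp hpv hq hqv
  exact ⟨u, v, rfl, {z | z ∈ w.support}, fun z hz => (hw z hz).1, w.support.finite_toSet,
    w.connected_induce_support, ⟨p, w.start_mem_support, hpu⟩,
    Set.disjoint_left.mpr fun z hz => (hw z hz).2, x, w.end_mem_support, hx⟩

/-- Each edge is cut where it first meets the cell of its head, and the part before that is added to
the branch set of its tail. -/
theorem nonempty_minorModel [Finite V] (D : CellDrawing G H) : Nonempty (MinorModel G H) := by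
  choose tail head ends_eq Q Q_subset Q_finite Q_connected Q_tail Q_head Q_adj
    using D.exists_initial_part
  have eq_tail {e : G.edgeSet} {v : V} {z : W} (hzQ : z ∈ Q e) (hzv : z ∈ D.cell v) :
      v = tail e := by
    have mem : v ∈ (e : Sym2 V) := by
      by_contra h
      exact Set.disjoint_left.mp (D.disjoint_path_cell h) (Q_subset e hzQ) hzv
    rw [ends_eq, Sym2.mem_iff] at mem
    refine mem.resolve_right ?_
    rintro rfl
    exact Set.disjoint_left.mp (Q_head e) hzQ hzv
  refine ⟨⟨fun v => D.cell v ∪ ⋃ e : {e // tail e = v}, Q e, fun v => ?_, fun v => ?_,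
    fun u v huv => ?_, fun {u v} huv => ?_⟩⟩
  · exact (D.finite_cell v).union (Set.finite_iUnion fun e => Q_finite e)
  · exact connected_induce_union_iUnion (D.connected_cell v) (fun e => Q_connected e)
      fun ⟨e, he⟩ => by simpa only [← he, Set.inter_comm] using Q_tail e
  · simp only [Set.disjoint_left, Set.mem_union, Set.mem_iUnion]
    rintro z (hzu | ⟨⟨e, rfl⟩, hze⟩) (hzv | ⟨⟨e', rfl⟩, hze'⟩)
    · exact Set.disjoint_left.mp (D.disjoint_cell huv) hzu hzv
    · exact huv (eq_tail hze' hzu)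
    · exact huv (eq_tail hze hzv).symm
    · obtain ⟨w, hzw⟩ := Set.mem_iUnion.mp <|
        D.path_inter_subset (ne_of_apply_ne tail huv) ⟨Q_subset e hze, Q_subset e' hze'⟩
      exact huv ((eq_tail hze hzw).symm.trans (eq_tail hze' hzw))
  · obtain ⟨x, hx, y, hy, hxy⟩ := Q_adj ⟨s(u, v), huv⟩
    rcases Sym2.eq_iff.mp (ends_eq ⟨s(u, v), huv⟩) with ⟨hu, hv⟩ | ⟨hu, hv⟩
    · exact ⟨x, .inr (Set.mem_iUnion.mpr ⟨⟨_, hu.symm⟩, hx⟩), y, .inl (hv ▸ hy), hxy⟩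
    · exact ⟨y, .inl (hu ▸ hy), x, .inr (Set.mem_iUnion.mpr ⟨⟨_, hv.symm⟩, hx⟩), hxy.symm⟩

end CellDrawing

end CellDrawing

section Pixel

open Filter Topology

/-- The lattice points which, after scaling by `δ`, are at distance less than `δ` from `K`. -/
def pixels (δ : ℝ) (K : Set (ℝ × ℝ)) : Set (ℤ × ℤ) :=
  {p | ∃ x ∈ K, dist ((δ * p.1, δ * p.2) : ℝ × ℝ) x < δ}

variable {δ : ℝ} {K L : Set (ℝ × ℝ)}

lemma mem_pixels {i j : ℤ} : (i, j) ∈ pixels δ K ↔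
    ∃ x ∈ K, dist (δ * i) x.1 < δ ∧ dist (δ * j) x.2 < δ := by
  simp [pixels, Prod.dist_eq]

lemma mem_pixels_singleton {i j : ℤ} {x : ℝ × ℝ} : (i, j) ∈ pixels δ {x} ↔
    dist (δ * i) x.1 < δ ∧ dist (δ * j) x.2 < δ := by
  simp [mem_pixels]

lemma pixels_mono (h : K ⊆ L) : pixels δ K ⊆ pixels δ L := fun _ ⟨x, hx, hdist⟩ => ⟨x, h hx, hdist⟩

lemma pixels_singleton_nonempty (hδ : 0 < δ) (x : ℝ × ℝ) : (pixels δ {x}).Nonempty := by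
  have dist_floor_lt (t : ℝ) : dist (δ * ⌊t / δ⌋) t < δ := by
    have lower := (le_div_iff₀ hδ).mp (Int.floor_le (t / δ))
    have upper := (div_lt_iff₀ hδ).mp (Int.lt_floor_add_one (t / δ))
    rw [Real.dist_eq, abs_lt]
    constructor <;> linarith
  exact ⟨(⌊x.1 / δ⌋, ⌊x.2 / δ⌋), mem_pixels_singleton.mpr ⟨dist_floor_lt _, dist_floor_lt _⟩⟩

lemma pixels_inter_nonempty (hδ : 0 < δ) (h : (K ∩ L).Nonempty) :
    (pixels δ K ∩ pixels δ L).Nonempty := by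
  obtain ⟨x, hxK, hxL⟩ := h
  obtain ⟨p, hp⟩ := pixels_singleton_nonempty hδ x
  exact ⟨p, pixels_mono (Set.singleton_subset_iff.mpr hxK) hp,
    pixels_mono (Set.singleton_subset_iff.mpr hxL) hp⟩

lemma finite_pixels (hδ : 0 < δ) (hK : Bornology.IsBounded K) : (pixels δ K).Finite := by
  obtain ⟨R, hR⟩ := hK.subset_closedBall 0
  have coordinate_mem {i : ℤ} {t : ℝ} (hi : dist (δ * i) t < δ) (ht : dist t 0 ≤ R) :
      i ∈ Set.Icc ⌊-(R + δ) / δ⌋ ⌈(R + δ) / δ⌉ := by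
    have bound : |δ * i| < R + δ := by
      simpa using (dist_triangle (δ * i) t 0).trans_lt (add_lt_add_of_lt_of_le hi ht) |>.trans_eq
        (add_comm δ R)
    obtain ⟨lower, upper⟩ := abs_lt.mp bound
    constructor
    · exact_mod_cast (Int.floor_le _).trans ((div_le_iff₀' hδ).mpr lower.le)
    · exact_mod_cast ((le_div_iff₀' hδ).mpr upper.le).trans (Int.le_ceil _)
  have finite_Icc := Set.finite_Icc ⌊-(R + δ) / δ⌋ ⌈(R + δ) / δ⌉
  refine (finite_Icc.prod finite_Icc).subset fun ⟨i, j⟩ hp => ?_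
  obtain ⟨x, hx, hi, hj⟩ := mem_pixels.mp hp
  have norm_le := max_le_iff.mp (Prod.dist_eq.symm.trans_le (hR hx))
  exact ⟨coordinate_mem hi norm_le.1, coordinate_mem hj norm_le.2⟩

lemma preconnected_pixels_singleton (x : ℝ × ℝ) :
    (grid.induce (pixels δ {x})).Preconnected := by
  have near {i k : ℤ} {t : ℝ} (hi : dist (δ * i) t < δ) (hk : dist (δ * k) t < δ) :
      i = k ∨ k = i + 1 ∨ i = k + 1 := by
    have hδ : 0 < δ := dist_nonneg.trans_lt hi
    have h : |δ * (i - k)| < δ * 2 := by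
      rw [mul_sub, ← Real.dist_eq, mul_two]
      exact (dist_triangle_right _ _ t).trans_lt (add_lt_add hi hk)
    rw [abs_mul, abs_of_pos hδ, mul_lt_mul_iff_right₀ hδ] at h
    have : |i - k| < 2 := by exact_mod_cast h
    grind
  rintro ⟨⟨i, j⟩, hp⟩ ⟨⟨k, l⟩, hq⟩
  obtain ⟨hi, hj⟩ := mem_pixels_singleton.mp hp
  obtain ⟨hk, hl⟩ := mem_pixels_singleton.mp hq
  have corner_mem : (k, j) ∈ pixels δ {x} := mem_pixels_singleton.mpr ⟨hk, hj⟩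
  have horizontal : (grid.induce (pixels δ {x})).Reachable ⟨(i, j), hp⟩ ⟨(k, j), corner_mem⟩ := by
    rcases near hi hk with rfl | rfl | rfl
    · exact .rfl
    · exact Adj.reachable (grid_adj_horizontal i j)
    · exact Adj.reachable (grid_adj_horizontal k j).symm
  have vertical : (grid.induce (pixels δ {x})).Reachable ⟨(k, j), corner_mem⟩ ⟨(k, l), hq⟩ := by
    rcases near hj hl with rfl | rfl | rfl
    · exact .rfl
    · exact Adj.reachable (grid_adj_vertical k j)
    · exact Adj.reachable (grid_adj_vertical k l).symm
  exact horizontal.trans vertical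

/-- Pixels of nearby points overlap, so reachability of pixels is a locally constant relation. -/
lemma preconnected_pixels (hδ : 0 < δ) (hK : IsPreconnected K) :
    (grid.induce (pixels δ K)).Preconnected := by
  let Linked (x y : ℝ × ℝ) : Prop := ∀ p q : pixels δ K, ↑p ∈ pixels δ {x} → ↑q ∈ pixels δ {y} →
    (grid.induce (pixels δ K)).Reachable p q
  have reachable {x : ℝ × ℝ} (hx : x ∈ K) : Linked x x := fun p q hp hq =>
    (preconnected_pixels_singleton x ⟨p, hp⟩ ⟨q, hq⟩).map
      (induceHomOfLE _ (pixels_mono (Set.singleton_subset_iff.mpr hx))).toHom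
  have exists_pixel {x : ℝ × ℝ} (hx : x ∈ K) : ∃ p : pixels δ K, ↑p ∈ pixels δ {x} := by
    obtain ⟨p, hp⟩ := pixels_singleton_nonempty hδ x
    exact ⟨⟨p, pixels_mono (Set.singleton_subset_iff.mpr hx) hp⟩, hp⟩
  have linked {x y : ℝ × ℝ} (hx : x ∈ K) (hy : y ∈ K) : Linked x y := by
    refine hK.induction₂ Linked (fun x hx => ?_) (fun x y z _ hy _ hxy hyz p q hp hq => ?_)
      (fun x y _ _ h p q hp hq => (h q p hq hp).symm) hx hy
    · obtain ⟨p₀, hp₀⟩ := exists_pixel hx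
      have near : ∀ᶠ y in 𝓝[K] x, dist ((δ * p₀.1.1, δ * p₀.1.2) : ℝ × ℝ) y < δ :=
        nhdsWithin_le_nhds ((continuous_const.dist continuous_id).continuousAt.eventually_lt
          continuousAt_const (by simpa [pixels] using hp₀))
      filter_upwards [near, self_mem_nhdsWithin] with y hy hyK p q hp hq
      exact (reachable hx p p₀ hp hp₀).trans (reachable hyK p₀ q ⟨y, rfl, hy⟩ hq)
    · obtain ⟨p₀, hp₀⟩ := exists_pixel hy
      exact (hxy p p₀ hp hp₀).trans (hyz p₀ q hp₀ hq)
  intro p q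
  obtain ⟨x, hx, hpx⟩ := p.2
  obtain ⟨y, hy, hqy⟩ := q.2
  exact linked hx hy p q ⟨x, rfl, hpx⟩ ⟨y, rfl, hqy⟩

lemma eventually_disjoint_pixels (hK : IsCompact K) (hL : IsCompact L) (h : Disjoint K L) :
    ∀ᶠ δ in 𝓝[>] (0 : ℝ), Disjoint (pixels δ K) (pixels δ L) := by
  obtain ⟨ε, hε, hdisj⟩ := h.exists_thickenings hK hL.isClosed
  filter_upwards [Ioo_mem_nhdsGT hε] with δ hδ
  have mem_thickening {K : Set (ℝ × ℝ)} {p : ℤ × ℤ} (hp : p ∈ pixels δ K) :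
      ((δ * p.1, δ * p.2) : ℝ × ℝ) ∈ Metric.thickening ε K :=
    Metric.thickening_mono hδ.2.le K (Metric.mem_thickening_iff.mpr hp)
  exact Set.disjoint_left.mpr fun p hpK hpL =>
    Set.disjoint_left.mp hdisj (mem_thickening hpK) (mem_thickening hpL)

end Pixel

section ThickDrawing

open Filter Topology

variable {V : Type*} {G : SimpleGraph V}

/-- A planar drawing whose vertices are thickened to disjoint compact sets, large enough for
distinct arcs to meet only in their interiors. -/
structure ThickDrawing (G : SimpleGraph V) where
  disc : V → Set (ℝ × ℝ)
  arc : G.edgeSet → Set (ℝ × ℝ)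
  isCompact_disc : ∀ v, IsCompact (disc v)
  isConnected_disc : ∀ v, IsConnected (disc v)
  isCompact_arc : ∀ e, IsCompact (arc e)
  isPreconnected_arc : ∀ e, IsPreconnected (arc e)
  disjoint_disc : Pairwise fun u v => Disjoint (disc u) (disc v)
  inter_nonempty : ∀ {e : G.edgeSet} {v}, v ∈ (e : Sym2 V) → (arc e ∩ disc v).Nonempty
  disjoint_arc_disc : ∀ {e : G.edgeSet} {v}, v ∉ (e : Sym2 V) → Disjoint (arc e) (disc v)
  arc_inter_subset : ∀ {e e'}, e ≠ e' → arc e ∩ arc e' ⊆ ⋃ v, interior (disc v)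

lemma eventually_disjoint_closedBall {X : Type*} [PseudoMetricSpace X] {x : X} {K : Set X}
    (hK : IsClosed K) (hx : x ∉ K) :
    ∀ᶠ r in 𝓝[>] (0 : ℝ), Disjoint K (Metric.closedBall x r) :=
  ((eventually_closedBall_subset (hK.compl_mem_nhds hx)).filter_mono nhdsWithin_le_nhds).mono
    fun _ => Set.subset_compl_iff_disjoint_left.mp

lemma IsPlanar.exists_arcs (hG : IsPlanar G) : ∃ (f : V → ℝ × ℝ) (arc : G.edgeSet → Set (ℝ × ℝ)),
    Function.Injective f ∧ (∀ e, IsCompact (arc e)) ∧ (∀ e, IsPreconnected (arc e)) ∧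
      (∀ e v, f v ∈ arc e ↔ v ∈ (e : Sym2 V)) ∧
      ∀ e e', e ≠ e' → arc e ∩ arc e' ⊆ Set.range f := by
  obtain ⟨f, γ, hf, hγ, hends, -, hint, hmeet⟩ := hG
  refine ⟨f, fun e => Set.range (γ e), hf, fun e => isCompact_range (hγ e),
    fun e => isPreconnected_range (hγ e), fun e v => ?_, ?_⟩
  · obtain ⟨u, w, huw, h0, h1⟩ := hends e
    rw [huw, Sym2.mem_iff]
    refine ⟨fun ⟨t, ht⟩ => ?_, ?_⟩
    · by_contra! hv
      refine hint e t (fun h => hv.1 ?_) (fun h => hv.2 ?_) v ht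
      · exact hf (ht.symm.trans ((congrArg (γ e) (Subtype.ext h)).trans h0))
      · exact hf (ht.symm.trans ((congrArg (γ e) (Subtype.ext h)).trans h1))
    · rintro (rfl | rfl)
      exacts [⟨_, h0⟩, ⟨_, h1⟩]
  · rintro e e' hee' _ ⟨⟨s, rfl⟩, ⟨t, hst⟩⟩
    exact hmeet e e' hee' s t hst.symm

theorem IsPlanar.nonempty_thickDrawing [Finite V] (hG : IsPlanar G) :
    Nonempty (ThickDrawing G) := by
  obtain ⟨f, arc, hf, isCompact_arc, isPreconnected_arc, mem_arc, arc_inter⟩ := hG.exists_arcs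
  have disjoint_balls {u v : V} (huv : u ≠ v) :
      ∀ᶠ r in 𝓝[>] (0 : ℝ), Disjoint (Metric.closedBall (f u) r) (Metric.closedBall (f v) r) := by
    filter_upwards [Ioo_mem_nhdsGT (half_pos (dist_pos.mpr (hf.ne huv)))] with r hr
    exact Metric.closedBall_disjoint_closedBall (by linarith [hr.2])
  obtain ⟨r, hr_disc, hr_arc, hr⟩ : ∃ r : ℝ,
      (∀ u v, u ≠ v → Disjoint (Metric.closedBall (f u) r) (Metric.closedBall (f v) r)) ∧
      (∀ (e : G.edgeSet) v, v ∉ (e : Sym2 V) → Disjoint (arc e) (Metric.closedBall (f v) r)) ∧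
      0 < r := by
    refine Eventually.exists (f := 𝓝[>] (0 : ℝ)) (.and ?_ (.and ?_ self_mem_nhdsWithin)) <;>
      simp only [eventually_all]
    · exact fun u v huv => disjoint_balls huv
    · exact fun e v hv =>
        eventually_disjoint_closedBall (isCompact_arc e).isClosed (mt (mem_arc e v).mp hv)
  refine ⟨⟨fun v => Metric.closedBall (f v) r, arc, fun v => isCompact_closedBall _ _,
    fun v => Metric.isConnected_closedBall hr.le, isCompact_arc, isPreconnected_arc,
    fun u v => hr_disc u v,
    fun {e v} hv => ⟨f v, (mem_arc e v).mpr hv, Metric.mem_closedBall_self hr.le⟩,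
    fun {e v} => hr_arc e v, fun {e e'} hee' x hx => ?_⟩⟩
  obtain ⟨v, rfl⟩ := arc_inter e e' hee' hx
  exact Set.mem_iUnion.mpr ⟨v, Metric.ball_subset_interior_closedBall (Metric.mem_ball_self hr)⟩

namespace ThickDrawing

theorem nonempty_cellDrawing [Finite V] (D : ThickDrawing G) : Nonempty (CellDrawing G grid) := by
  let outer (e : G.edgeSet) : Set (ℝ × ℝ) := D.arc e \ ⋃ v, interior (D.disc v)
  have isCompact_outer (e : G.edgeSet) : IsCompact (outer e) :=
    (D.isCompact_arc e).diff (isOpen_iUnion fun _ => isOpen_interior)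
  have disjoint_outer {e e' : G.edgeSet} (h : e ≠ e') : Disjoint (outer e) (outer e') :=
    Set.disjoint_left.mpr fun _ hx hx' => hx.2 (D.arc_inter_subset h ⟨hx.1, hx'.1⟩)
  obtain ⟨δ, hδ_disc, hδ_arc, hδ_outer, hδ⟩ : ∃ δ : ℝ,
      (∀ u v, u ≠ v → Disjoint (pixels δ (D.disc u)) (pixels δ (D.disc v))) ∧
      (∀ (e : G.edgeSet) v, v ∉ (e : Sym2 V) →
        Disjoint (pixels δ (D.arc e)) (pixels δ (D.disc v))) ∧
      (∀ e e', e ≠ e' → Disjoint (pixels δ (outer e)) (pixels δ (outer e'))) ∧ 0 < δ := by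
    refine Eventually.exists (f := 𝓝[>] (0 : ℝ))
      (.and ?_ (.and ?_ (.and ?_ self_mem_nhdsWithin))) <;> simp only [eventually_all]
    · exact fun u v h =>
        eventually_disjoint_pixels (D.isCompact_disc u) (D.isCompact_disc v) (D.disjoint_disc h)
    · exact fun e v h =>
        eventually_disjoint_pixels (D.isCompact_arc e) (D.isCompact_disc v) (D.disjoint_arc_disc h)
    · exact fun e e' h =>
        eventually_disjoint_pixels (isCompact_outer e) (isCompact_outer e') (disjoint_outer h)
  have mem_outer_or {e : G.edgeSet} {p : ℤ × ℤ} (hp : p ∈ pixels δ (D.arc e)) :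
      p ∈ pixels δ (outer e) ∨ p ∈ ⋃ v, pixels δ (D.disc v) := by
    obtain ⟨x, hx, hpx⟩ := hp
    by_cases hdisc : x ∈ ⋃ v, interior (D.disc v)
    · obtain ⟨v, hv⟩ := Set.mem_iUnion.mp hdisc
      exact .inr (Set.mem_iUnion.mpr ⟨v, x, interior_subset hv, hpx⟩)
    · exact .inl ⟨x, ⟨hx, hdisc⟩, hpx⟩
  refine ⟨⟨fun v => pixels δ (D.disc v), fun e => pixels δ (D.arc e),
    fun v => finite_pixels hδ (D.isCompact_disc v).isBounded, fun v => ?_,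
    fun e => preconnected_pixels hδ (D.isPreconnected_arc e), fun u v => hδ_disc u v,
    fun hv => pixels_inter_nonempty hδ (D.inter_nonempty hv), fun {e v} => hδ_arc e v, ?_⟩⟩
  · rw [connected_iff]
    obtain ⟨p, hp, -⟩ := pixels_inter_nonempty hδ
      ((Set.inter_self (D.disc v)).symm ▸ (D.isConnected_disc v).nonempty)
    exact ⟨preconnected_pixels hδ (D.isConnected_disc v).isPreconnected, ⟨p, hp⟩⟩
  · rintro e e' hee' p ⟨hp, hp'⟩
    refine (mem_outer_or hp).elim (fun h => (mem_outer_or hp').resolve_left fun h' => ?_) id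
    exact Set.disjoint_left.mp (hδ_outer e e' hee') h h'

end ThickDrawing

theorem IsPlanar.exists_isDual [Finite V] (hG : IsPlanar G) :
    ∃ (r : ℤ × ℤ → ℤ × ℤ → Prop) (sides : G.edgeSet → Sym2 (Quot r)),
      IsDual (fun e : G.edgeSet => (e : Sym2 V)) sides := by
  obtain ⟨thick⟩ := hG.nonempty_thickDrawing
  obtain ⟨cells⟩ := thick.nonempty_cellDrawing
  obtain ⟨M⟩ := cells.nonempty_minorModel
  exact M.exists_isDual gridEnds_injective isDual_grid

end ThickDrawing

section Planar

variable {V W : Type*} {G : SimpleGraph V} {H : SimpleGraph W}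

lemma IsPlanar.of_isContained (hH : IsPlanar H) (h : G ⊑ H) : IsPlanar G := by
  obtain ⟨f, γ, hf, hγ, hends, hinj, hint, hmeet⟩ := hH
  obtain ⟨φ⟩ := h
  have exists_ends (e : G.edgeSet) : ∃ u v, (e : Sym2 V) = s(u, v) ∧
      γ (φ.mapEdgeSet e) ⟨0, by norm_num⟩ = f (φ u) ∧
      γ (φ.mapEdgeSet e) ⟨1, by norm_num⟩ = f (φ v) := by
    obtain ⟨u, v, huv, h0, h1⟩ := hends (φ.mapEdgeSet e)
    obtain ⟨⟨a, b⟩, hab⟩ := e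
    rcases Sym2.eq_iff.mp huv with ⟨rfl, rfl⟩ | ⟨rfl, rfl⟩
    exacts [⟨a, b, rfl, h0, h1⟩, ⟨b, a, Sym2.eq_swap, h0, h1⟩]
  refine ⟨f ∘ φ, γ ∘ φ.mapEdgeSet, hf.comp φ.injective, fun e => hγ _, exists_ends,
    fun e => hinj _, fun e t h0 h1 v => hint _ t h0 h1 _, fun e e' hee' s t hst => ?_⟩
  obtain ⟨w, hw⟩ := hmeet _ _ (φ.mapEdgeSet.injective.ne hee') s t hst
  obtain ⟨u, v, -, h0, h1⟩ := exists_ends e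
  by_cases hs0 : (s : ℝ) = 0
  · exact ⟨u, h0.symm.trans (congrArg _ (Subtype.ext hs0.symm))⟩
  by_cases hs1 : (s : ℝ) = 1
  · exact ⟨v, h1.symm.trans (congrArg _ (Subtype.ext hs1.symm))⟩
  exact absurd hw.symm (hint _ s hs0 hs1 w)

/-- Euler's inequality: every face of a triangle-free planar graph has at least four sides. -/
theorem IsPlanar.ncard_edgeSet_add_four_le [Finite V] (hG : IsPlanar G) (hfree : G.CliqueFree 3)
    (hV : 3 ≤ Nat.card V) : G.edgeSet.ncard + 4 ≤ 2 * Nat.card V := by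
  classical
  have := Fintype.ofFinite V
  have : Nonempty V := Finite.card_pos_iff.mp (by lia)
  obtain ⟨r, sides, h⟩ := hG.exists_isDual
  rw [← Nat.card_coe_set_eq, Nat.card_eq_fintype_card, Nat.card_eq_fintype_card] at *
  rcases (essentialFaces sides).eq_empty_or_nonempty with hempty | hne
  · have forest := card_add_one_le_finrank_ker_boundary_add_card fun e : G.edgeSet => (e : Sym2 V)
    rw [h.finrank_ker_boundary_eq_zero hempty] at forest
    lia
  · have := h.mul_card_add_two_le hne fun c => four_le_card_support_of_boundary_eq_zero hfree
    lia

/-- `G` is the union of `t` planar subgraphs, as in the definition of `thickness`. -/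
def IsUnionOfPlanar (G : SimpleGraph V) (t : ℕ) : Prop :=
  ∃ H : Fin t → SimpleGraph V, (∀ i, H i ≤ G) ∧ (∀ i, IsPlanar (H i)) ∧ ⨆ i, H i = G

namespace IsUnionOfPlanar

lemma of_cover {ι : Type*} [Fintype ι] {H : ι → SimpleGraph V} (hH : ∀ i, IsPlanar (H i))
    (hcover : ∀ {u v}, G.Adj u v → ∃ i, (H i).Adj u v) : IsUnionOfPlanar G (Fintype.card ι) := by
  let label := (Fintype.equivFin ι).symm
  refine ⟨fun i => G ⊓ H (label i), fun i => inf_le_left,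
    fun i => (hH _).of_isContained (.of_le inf_le_right), ?_⟩
  refine le_antisymm (iSup_le fun i => inf_le_left) fun u v huv => ?_
  obtain ⟨i, hi⟩ := hcover huv
  exact iSup_adj.mpr ⟨label.symm i, huv, by simpa using hi⟩

lemma of_isContained {t : ℕ} (hH : IsUnionOfPlanar H t) (h : G ⊑ H) : IsUnionOfPlanar G t := by
  obtain ⟨K, -, hK, rfl⟩ := hH
  obtain ⟨φ⟩ := h
  have cover {u v : V} (huv : G.Adj u v) : ∃ i, ((K i).comap φ.toEmbedding).Adj u v := by
    obtain ⟨i, hi⟩ := iSup_adj.mp (φ.toHom.map_adj huv)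
    exact ⟨i, hi⟩
  have planar (i) : IsPlanar ((K i).comap φ.toEmbedding) :=
    (hK i).of_isContained (Embedding.comap φ.toEmbedding _).isContained
  simpa only [Fintype.card_fin] using of_cover planar cover

theorem ncard_edgeSet_add_le [Finite V] {t : ℕ} (h : IsUnionOfPlanar G t)
    (hfree : G.CliqueFree 3) (hV : 3 ≤ Nat.card V) :
    G.edgeSet.ncard + t * 4 ≤ t * (2 * Nat.card V) := by
  obtain ⟨H, hle, hH, hsup⟩ := h
  have ncard_le : G.edgeSet.ncard ≤ ∑ i, (H i).edgeSet.ncard := by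
    rw [← hsup, edgeSet_iSup]
    simpa using Finset.univ.set_ncard_biUnion_le fun i => (H i).edgeSet
  calc G.edgeSet.ncard + t * 4 ≤ ∑ i, ((H i).edgeSet.ncard + 4) := by
        simpa [Finset.sum_add_distrib] using ncard_le
    _ ≤ ∑ _i : Fin t, 2 * Nat.card V := Finset.sum_le_sum fun i _ =>
        (hH i).ncard_edgeSet_add_four_le (hfree.anti (hle i)) hV
    _ = t * (2 * Nat.card V) := by simp

end IsUnionOfPlanar

lemma completeBipartiteGraph_isContained_completeMultipartiteGraph {ι : Type*} (V : ι → Type*)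
    {i j : ι} (hij : i ≠ j) : completeBipartiteGraph (V i) (V j) ⊑ completeMultipartiteGraph V :=
  ⟨⟨⟨Sum.elim (Sigma.mk i) (Sigma.mk j), by rintro (u | u) (v | v) <;> simp [hij, hij.symm]⟩, by
    rintro (u | u) (v | v) <;> simp [hij, hij.symm]⟩⟩

theorem IsUnionOfPlanar.mul_add_le {m n t : ℕ} (hmn : 3 ≤ m + n)
    (h : IsUnionOfPlanar (completeBipartiteGraph (Fin m) (Fin n)) t) :
    m * n + t * 4 ≤ t * (2 * (m + n)) := by
  have hfree : (completeBipartiteGraph (Fin m) (Fin n)).CliqueFree 3 :=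
    (CompleteBipartiteGraph.bicoloring _ _).colorable.cliqueFree (by simp)
  have card_vertices : Nat.card (Fin m ⊕ Fin n) = m + n := by simp
  have card_edges : (completeBipartiteGraph (Fin m) (Fin n)).edgeSet.ncard = m * n := by
    simp [Set.ncard, encard_edgeSet_completeBipartiteGraph]
  simpa only [card_vertices, card_edges] using h.ncard_edgeSet_add_le hfree (by lia)

end Planar

section Straight

variable {V E X : Type*}

/-- The simple graph with an edge for each `e : E` whose ends are distinct. The ends come as an
ordered pair so that the edge can be drawn as a parametrized segment. -/
def graphOfEnds (ends : E → V × V) : SimpleGraph V :=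
  fromEdgeSet (Set.range fun e => s((ends e).1, (ends e).2))

variable {ends : E → V × V}

lemma graphOfEnds_adj_of_eq {u v : V} (e : E)
    (he : ends e = (u, v)) (hne : u ≠ v) : (graphOfEnds ends).Adj u v :=
  (fromEdgeSet_adj _).mpr ⟨⟨e, by simp only [he]⟩, hne⟩

lemma exists_eq_of_mem_edgeSet_graphOfEnds (e : (graphOfEnds ends).edgeSet) :
    ∃ i, (e : Sym2 V) = s((ends i).1, (ends i).2) ∧ (ends i).1 ≠ (ends i).2 := by
  obtain ⟨e, he⟩ := e
  rw [graphOfEnds, edgeSet_fromEdgeSet] at he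
  obtain ⟨⟨i, rfl⟩, hdiag⟩ := he
  exact ⟨i, rfl, by simpa using hdiag⟩

/-- In a straight-line drawing, disjointness of vertices and open edges can be certified by a
function on the plane which is constant on each of them and separates them. -/
theorem isPlanar_graphOfEnds_of_label {pos : V → ℝ × ℝ} {label : ℝ × ℝ → X}
    {code : V ⊕ E → X} (hcode : Function.Injective code)
    (hvertex : ∀ v, label (pos v) = code (.inl v))
    (hedge : ∀ e, ∀ t ∈ Set.Ioo (0 : ℝ) 1,
      label (AffineMap.lineMap (pos (ends e).1) (pos (ends e).2) t) = code (.inr e)) :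
    IsPlanar (graphOfEnds ends) := by
  have pos_injective : Function.Injective pos := fun u v huv =>
    Sum.inl_injective (hcode ((hvertex u).symm.trans ((congrArg label huv).trans (hvertex v))))
  choose index hindex hne using exists_eq_of_mem_edgeSet_graphOfEnds (ends := ends)
  let arc (e : (graphOfEnds ends).edgeSet) : ℝ →ᵃ[ℝ] ℝ × ℝ :=
    AffineMap.lineMap (pos (ends (index e)).1) (pos (ends (index e)).2)
  have arc_zero (e) : arc e 0 = pos (ends (index e)).1 := AffineMap.lineMap_apply_zero _ _
  have arc_one (e) : arc e 1 = pos (ends (index e)).2 := AffineMap.lineMap_apply_one _ _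
  have label_arc (e) {t : Set.Icc (0 : ℝ) 1} (h0 : (t : ℝ) ≠ 0) (h1 : (t : ℝ) ≠ 1) :
      label (arc e t) = code (.inr (index e)) :=
    hedge _ _ ⟨t.2.1.lt_of_ne' h0, t.2.2.lt_of_ne h1⟩
  refine ⟨pos, fun e t => arc e t, pos_injective,
    fun e => AffineMap.lineMap_continuous.comp continuous_subtype_val,
    fun e => ⟨_, _, hindex e, arc_zero e, arc_one e⟩,
    fun e => (AffineMap.lineMap_injective ℝ (pos_injective.ne (hne e))).comp
      Subtype.val_injective, fun e t h0 h1 v htv => ?_, fun e e' hee' s t hst => ?_⟩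
  · exact absurd (hcode ((label_arc e h0 h1).symm.trans ((congrArg label htv).trans (hvertex v))))
      Sum.inr_ne_inl
  · by_contra hrange
    have : arc e s = arc e' t := hst
    have label_eq {e} {t : Set.Icc (0 : ℝ) 1} (h : arc e t ∉ Set.range pos) :
        label (arc e t) = code (.inr (index e)) :=
      label_arc e (fun h0 => h ⟨_, (h0 ▸ arc_zero e).symm⟩) fun h1 => h ⟨_, (h1 ▸ arc_one e).symm⟩
    have index_eq : index e = index e' := Sum.inr_injective (hcode
      ((label_eq hrange).symm.trans ((congrArg label hst).trans (label_eq (this ▸ hrange)))))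
    exact hee' (Subtype.ext (by rw [hindex e, hindex e', index_eq]))

end Straight

section DoubleFan

/-- The edges of the double fan: spokes from the two poles to each point, and the path through
consecutive points. -/
inductive FanEdge
  | spoke (p : Fin 2) (m : ℕ)
  | path (m : ℕ)

/-- The ends of an edge of the double fan, with poles on the left and points on the right. -/
def fanEnds : FanEdge → (Fin 2 ⊕ ℕ) × (Fin 2 ⊕ ℕ)
  | .spoke p m => (.inl p, .inr m)
  | .path m => (.inr m, .inr (m + 1))

/-- The double fan: an infinite path, every vertex of which is joined to two poles. -/
def doubleFan : SimpleGraph (Fin 2 ⊕ ℕ) := graphOfEnds fanEnds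

lemma doubleFan_adj_spoke (p : Fin 2) (m : ℕ) : doubleFan.Adj (.inl p) (.inr m) :=
  graphOfEnds_adj_of_eq (.spoke p m) rfl (by simp)

lemma doubleFan_adj_path (m : ℕ) : doubleFan.Adj (.inr m) (.inr (m + 1)) :=
  graphOfEnds_adj_of_eq (.path m) rfl (by simp)

/-- The ordinate of a pole in the drawing of the double fan. -/
def poleSign (p : Fin 2) : SignType := ![1, -1] p

/-- The drawing of the double fan with its path on the positive horizontal axis. -/
noncomputable def fanPos : Fin 2 ⊕ ℕ → ℝ × ℝ
  | .inl p => (0, poleSign p)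
  | .inr m => (m + 1, 0)

/-- The side of the horizontal axis, and the rounded abscissa at which the line from the pole on
this side meets the axis. -/
noncomputable def fanLabel (p : ℝ × ℝ) : SignType × ℤ × ℤ :=
  (SignType.sign p.2, ⌊p.1 / (1 - |p.2|)⌋, ⌈p.1 / (1 - |p.2|)⌉)

/-- The value of `fanLabel` on each vertex and each open edge. -/
def fanCode : (Fin 2 ⊕ ℕ) ⊕ FanEdge → SignType × ℤ × ℤ
  | .inl (.inl p) => (poleSign p, 0, 0)
  | .inl (.inr m) => (0, m + 1, m + 1)
  | .inr (.spoke p m) => (poleSign p, m + 1, m + 1)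
  | .inr (.path m) => (0, m + 1, m + 2)

lemma fanCode_injective : Function.Injective fanCode := by
  have poleSign_injective : Function.Injective poleSign := by decide
  have poleSign_ne_zero : ∀ p, poleSign p ≠ 0 := by decide
  rintro ((p | m) | (⟨p, m⟩ | m)) ((q | n) | (⟨q, n⟩ | n)) h <;>
    simp only [fanCode, Prod.mk.injEq, poleSign_injective.eq_iff] at h ⊢ <;> grind

lemma fanLabel_mul_poleSign (p : Fin 2) (m : ℕ) {t : ℝ} (h0 : 0 < t) (h1 : t < 1) :
    fanLabel (t * (m + 1), (1 - t) * poleSign p) = fanCode (.inr (.spoke p m)) := by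
  have slope : t * (m + 1 : ℝ) / (1 - |(1 - t) * poleSign p|) = m + 1 := by
    have abs_eq : |(1 - t) * (poleSign p : ℝ)| = 1 - t := by
      rw [abs_mul, abs_of_pos (sub_pos.mpr h1)]
      fin_cases p <;> simp [poleSign]
    rw [abs_eq, sub_sub_cancel, mul_div_cancel_left₀ _ h0.ne']
  have sign_eq : SignType.sign ((1 - t) * (poleSign p : ℝ)) = poleSign p := by
    rw [sign_mul, sign_pos (sub_pos.mpr h1), one_mul]
    fin_cases p <;> simp [poleSign]
  simp only [fanLabel, slope, sign_eq]
  simp [fanCode]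

lemma fanLabel_add_one (m : ℕ) {t : ℝ} (h0 : 0 < t) (h1 : t < 1) :
    fanLabel (t + (m + 1), 0) = fanCode (.inr (.path m)) := by
  have floor_eq : ⌊t + (m + 1)⌋ = (m : ℤ) + 1 :=
    Int.floor_eq_iff.mpr (by push_cast; constructor <;> linarith)
  have ceil_eq : ⌈t + (m + 1)⌉ = (m : ℤ) + 2 :=
    Int.ceil_eq_iff.mpr (by push_cast; constructor <;> linarith)
  simp [fanLabel, fanCode, floor_eq, ceil_eq]

theorem isPlanar_doubleFan : IsPlanar doubleFan := by
  refine isPlanar_graphOfEnds_of_label (pos := fanPos) (label := fanLabel) fanCode_injective ?_ ?_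
  · rintro (p | m)
    · fin_cases p <;> simp [fanPos, fanLabel, fanCode, poleSign]
    · simp [fanPos, fanLabel, fanCode]
  · rintro (⟨p, m⟩ | m) t ⟨h0, h1⟩
    · simpa [fanPos, fanEnds, AffineMap.lineMap_apply_module] using
        fanLabel_mul_poleSign p m h0 h1
    · simpa [fanPos, fanEnds, AffineMap.lineMap_apply] using fanLabel_add_one m h0 h1

end DoubleFan

section FilledCube

/-- The vertices of the filled cube: the corners of the inner square, and for each of the four faces
around it the points of the diagonal which starts at the outer corner `diag k 0`. -/
inductive CubeVertex
  | inner (k : Fin 4)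
  | diag (k : Fin 4) (m : ℕ)
  deriving DecidableEq

/-- The edges of the filled cube: the sides of the inner square, and the joins of each diagonal
point to the two corners of its face which are not on the diagonal. -/
inductive CubeEdge
  | square (k : Fin 4)
  | inward (k : Fin 4) (m : ℕ)
  | outward (k : Fin 4) (m : ℕ)

/-- The ends of an edge of the filled cube. -/
def cubeEnds : CubeEdge → CubeVertex × CubeVertex
  | .square k => (.inner k, .inner (k + 1))
  | .inward k m => (.inner k, .diag k m)
  | .outward k m => (.diag (k + 1) 0, .diag k m)

/-- The cube graph, drawn as two nested squares, with infinitely many additional vertices on a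
diagonal of each of the four faces between the squares. -/
def filledCube : SimpleGraph CubeVertex := graphOfEnds cubeEnds

lemma filledCube_adj_diag {k : Fin 4} {v : CubeVertex} (hv : v = .inner k ∨ v = .diag (k + 1) 0)
    (m : ℕ) : filledCube.Adj v (.diag k m) := by
  rcases hv with rfl | rfl
  · exact graphOfEnds_adj_of_eq (.inward k m) rfl (by simp)
  · exact graphOfEnds_adj_of_eq (.outward k m) rfl (by simp)

/-- The rotation of the plane by `k` quarter turns. -/
def quarterTurns (k : Fin 4) (p : ℝ × ℝ) : ℝ × ℝ :=
  ![(p.1, p.2), (-p.2, p.1), (-p.1, -p.2), (p.2, -p.1)] k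

lemma quarterTurns_add_one (k : Fin 4) (x y : ℝ) :
    quarterTurns (k + 1) (x, y) = quarterTurns k (-y, x) := by
  fin_cases k <;> simp [quarterTurns]

lemma lineMap_quarterTurns (k : Fin 4) (p q : ℝ × ℝ) (t : ℝ) :
    AffineMap.lineMap (quarterTurns k p) (quarterTurns k q) t =
      quarterTurns k (AffineMap.lineMap p q t) := by
  fin_cases k <;> ext <;> simp [quarterTurns, AffineMap.lineMap_apply_module] <;> ring

lemma injOn_quarterTurns : Set.InjOn (fun q : Fin 4 × ℝ × ℝ => quarterTurns q.1 q.2)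
    {q | 0 < q.2.1 ∧ 0 ≤ q.2.2} := by
  rintro ⟨k, x, y⟩ ⟨hx, hy⟩ ⟨l, x', y'⟩ ⟨hx', hy'⟩ h
  fin_cases k <;> fin_cases l <;>
    simp only [quarterTurns, Fin.isValue, Fin.zero_eta, Fin.mk_one, Fin.reduceFinMk,
      Matrix.cons_val, Matrix.cons_val_zero, Matrix.cons_val_one, Prod.mk.injEq]
      at h hx hy hx' hy' ⊢ <;>
    grind

/-- A diagonal point in coordinates in which its face has the corners `(1, 0)`, `(2, 0)`, `(0, 2)`
and `(0, 1)`. -/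
noncomputable def diagPos (m : ℕ) : ℝ × ℝ := (2 * (1 / (m + 1)), 1 - 1 / (m + 1))

/-- The drawing of the filled cube, whose inner square has the corners `(±1, 0)` and `(0, ±1)`. -/
noncomputable def cubePos : CubeVertex → ℝ × ℝ
  | .inner k => quarterTurns k (1, 0)
  | .diag k m => quarterTurns k (diagPos m)

/-- Separates the vertices and open edges of a face in the coordinates of `diagPos`. The diagonal
`h = 2` splits it into two triangles, and the third component tells apart the segments from the
apex `(1, 0)` in one triangle and those from the apex `(0, 2)` in the other. -/
noncomputable def faceLabel (p : ℝ × ℝ) : SignType × SignType × ℝ :=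
  let h := p.1 + 2 * p.2
  (SignType.sign (h - 1), SignType.sign (h - 2), if h ≤ 2 then p.2 / (h - 1) else p.1 / (4 - h))

/-- The index of the quarter turn taking a point of the plane to the quadrant `0 < x`, `0 ≤ y`,
together with the label of the image there. -/
noncomputable def cubeLabel (p : ℝ × ℝ) : Fin 4 × SignType × SignType × ℝ :=
  let q := Function.invFunOn (fun q : Fin 4 × ℝ × ℝ => quarterTurns q.1 q.2)
    {q | 0 < q.2.1 ∧ 0 ≤ q.2.2} p
  (q.1, faceLabel q.2)

lemma cubeLabel_quarterTurns (k : Fin 4) {x y : ℝ} (hx : 0 < x) (hy : 0 ≤ y) :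
    cubeLabel (quarterTurns k (x, y)) = (k, faceLabel (x, y)) := by
  have := injOn_quarterTurns.leftInvOn_invFunOn (x := (k, x, y)) ⟨hx, hy⟩
  simp only [cubeLabel, this]

/-- The value of `cubeLabel` on each vertex and each open edge. -/
noncomputable def cubeCode : CubeVertex ⊕ CubeEdge → Fin 4 × SignType × SignType × ℝ
  | .inl (.inner k) => (k, 0, -1, 0)
  | .inl (.diag k m) => (k, 1, 0, 1 - 1 / (m + 1))
  | .inr (.square k) => (k, 1, -1, 1)
  | .inr (.inward k m) => (k, 1, -1, 1 - 1 / (m + 1))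
  | .inr (.outward k m) => (k, 1, 1, 1 / (m + 1))

lemma cubeCode_injective : Function.Injective cubeCode := by
  have ne_zero (m : ℕ) : (1 : ℝ) / (m + 1) ≠ 0 := by positivity
  have div_inj (m n : ℕ) : (1 : ℝ) / (m + 1) = 1 / (n + 1) ↔ m = n := by simp
  have signs_ne : (0 : SignType) ≠ 1 ∧ (0 : SignType) ≠ -1 ∧ (1 : SignType) ≠ -1 := by decide
  rintro ((k | ⟨k, m⟩) | (k | ⟨k, m⟩ | ⟨k, m⟩)) ((l | ⟨l, n⟩) | (l | ⟨l, n⟩ | ⟨l, n⟩)) h <;>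
    simp only [cubeCode, Prod.mk.injEq, sub_right_inj, div_inj] at h ⊢ <;> grind

lemma faceLabel_diag (μ : ℝ) : faceLabel (2 * μ, 1 - μ) = (1, 0, 1 - μ) := by
  have height : 2 * μ + 2 * (1 - μ) = 2 := by ring
  norm_num [faceLabel, height]

lemma faceLabel_lineMap_inward (μ : ℝ) {t : ℝ} (h0 : 0 < t) (h1 : t < 1) :
    faceLabel (AffineMap.lineMap (1, 0) (2 * μ, 1 - μ) t) = (1, -1, 1 - μ) := by
  have height : 1 - t + t * (2 * μ) + 2 * (t * (1 - μ)) = 1 + t := by ring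
  have le_two : 1 + t ≤ 2 := by linarith
  have sign_eq : SignType.sign (1 + t - 2) = -1 := sign_neg (by linarith)
  simp [faceLabel, AffineMap.lineMap_apply_module, height, le_two, sign_eq, h0, h0.ne']

lemma faceLabel_lineMap_outward (μ : ℝ) {t : ℝ} (h0 : 0 < t) (h1 : t < 1) :
    faceLabel (AffineMap.lineMap (0, 2) (2 * μ, 1 - μ) t) = (1, 1, μ) := by
  have height : t * (2 * μ) + 2 * ((1 - t) * 2 + t * (1 - μ)) = 4 - 2 * t := by ring
  have not_le_two : ¬ 4 - 2 * t ≤ 2 := by linarith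
  have sign_one : SignType.sign (4 - 2 * t - 1) = 1 := sign_pos (by linarith)
  have sign_two : SignType.sign (4 - 2 * t - 2) = 1 := sign_pos (by linarith)
  have slope : t * (2 * μ) / (2 * t) = μ := by field_simp
  simp [faceLabel, AffineMap.lineMap_apply_module, height, not_le_two, sign_one, sign_two, slope]

lemma diagPos_fst_pos (m : ℕ) : 0 < (diagPos m).1 := by
  unfold diagPos
  positivity

lemma diagPos_snd_nonneg (m : ℕ) : 0 ≤ (diagPos m).2 :=
  sub_nonneg.mpr (div_le_one_of_le₀ (by simp) (by positivity))

lemma cubeLabel_lineMap (k : Fin 4) {p q : ℝ × ℝ} {t : ℝ} (ht : t ∈ Set.Ioo (0 : ℝ) 1)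
    (hx : 0 < (AffineMap.lineMap p q t : ℝ × ℝ).1) (hp : 0 ≤ p.2) (hq : 0 ≤ q.2) :
    cubeLabel (AffineMap.lineMap (quarterTurns k p) (quarterTurns k q) t) =
      (k, faceLabel (AffineMap.lineMap p q t)) := by
  have hy : 0 ≤ (AffineMap.lineMap p q t : ℝ × ℝ).2 := by
    have := sub_nonneg.mpr ht.2.le
    have := ht.1.le
    simp only [AffineMap.lineMap_apply_module, Prod.snd_add, Prod.smul_snd, smul_eq_mul]
    positivity
  rw [lineMap_quarterTurns, ← cubeLabel_quarterTurns k hx hy]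

theorem isPlanar_filledCube : IsPlanar filledCube := by
  refine isPlanar_graphOfEnds_of_label (pos := cubePos) (label := cubeLabel) cubeCode_injective
    ?_ ?_
  · rintro (k | ⟨k, m⟩)
    · simp [cubePos, cubeLabel_quarterTurns k one_pos le_rfl, faceLabel, cubeCode]
    · rw [cubePos, cubeLabel_quarterTurns k (diagPos_fst_pos m) (diagPos_snd_nonneg m)]
      exact congrArg (Prod.mk k) (faceLabel_diag _)
  · have fst_pos {x y : ℝ} {q : ℝ × ℝ} (hx : 0 ≤ x) (hq : 0 < q.1) {t : ℝ}
        (ht : t ∈ Set.Ioo (0 : ℝ) 1) : 0 < (AffineMap.lineMap (x, y) q t : ℝ × ℝ).1 := by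
      have := sub_pos.mpr ht.2
      have := ht.1
      simp only [AffineMap.lineMap_apply_module, Prod.fst_add, Prod.smul_fst, smul_eq_mul]
      positivity
    rintro (k | ⟨k, m⟩ | ⟨k, m⟩) t ht
    · have inner_add_one : quarterTurns (k + 1) (1, 0) = quarterTurns k (0, 1) := by
        simp [quarterTurns_add_one]
      have fst_lineMap_pos : 0 < (AffineMap.lineMap ((1, 0) : ℝ × ℝ) (0, 1) t : ℝ × ℝ).1 := by
        simpa [AffineMap.lineMap_apply_module] using ht.2
      simp only [cubeEnds, cubePos, inner_add_one]
      rw [cubeLabel_lineMap k ht fst_lineMap_pos le_rfl zero_le_one]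
      simpa [cubeCode] using faceLabel_lineMap_inward 0 ht.1 ht.2
    · rw [cubeEnds, cubePos, cubePos, cubeLabel_lineMap k ht
        (fst_pos zero_le_one (diagPos_fst_pos m) ht) le_rfl (diagPos_snd_nonneg m)]
      exact congrArg (Prod.mk k) (faceLabel_lineMap_inward _ ht.1 ht.2)
    · have diag_add_one : quarterTurns (k + 1) (diagPos 0) = quarterTurns k (0, 2) := by
        simp [diagPos, quarterTurns_add_one]
      simp only [cubeEnds, cubePos, diag_add_one]
      rw [cubeLabel_lineMap k ht
        (fst_pos le_rfl (diagPos_fst_pos m) ht) zero_le_two (diagPos_snd_nonneg m)]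
      exact congrArg (Prod.mk k) (faceLabel_lineMap_outward _ ht.1 ht.2)

end FilledCube

section Placement

variable {n : ℕ}

/-- The edges between the parts of `K_{2,n,n}`, for vertices named `inl p` and `inr (s, i)`. -/
inductive TripartiteEdge : Fin 2 ⊕ Fin 2 × Fin n → Fin 2 ⊕ Fin 2 × Fin n → Prop
  | pole (p s : Fin 2) (i : Fin n) : TripartiteEdge (.inl p) (.inr (s, i))
  | cross (i j : Fin n) : TripartiteEdge (.inr (0, i)) (.inr (1, j))

/-- The graph `K_{2,n,n}`, with two poles `inl p` and two sides of vertices `inr (s, i)`. -/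
def tripartiteGraph (n : ℕ) : SimpleGraph (Fin 2 ⊕ Fin 2 × Fin n) := fromRel TripartiteEdge

lemma TripartiteEdge.adj {u v : Fin 2 ⊕ Fin 2 × Fin n} (h : TripartiteEdge u v) :
    (tripartiteGraph n).Adj u v :=
  ⟨by cases h <;> simp, .inl h⟩

lemma completeMultipartiteGraph_isContained_tripartiteGraph (n : ℕ) :
    completeMultipartiteGraph ![Fin 2, Fin n, Fin n] ⊑ tripartiteGraph n := by
  let rename : (Σ k : Fin 3, ![Fin 2, Fin n, Fin n] k) → Fin 2 ⊕ Fin 2 × Fin n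
    | ⟨0, p⟩ => .inl p
    | ⟨1, i⟩ => .inr (0, i)
    | ⟨2, j⟩ => .inr (1, j)
  let unname : Fin 2 ⊕ Fin 2 × Fin n → Σ k : Fin 3, ![Fin 2, Fin n, Fin n] k
    | .inl p => ⟨0, p⟩
    | .inr (0, i) => ⟨1, i⟩
    | .inr (1, j) => ⟨2, j⟩
  have unname_rename : Function.LeftInverse unname rename := by
    rintro ⟨k, u⟩
    fin_cases k <;> rfl
  refine ⟨⟨⟨rename, ?_⟩, unname_rename.injective⟩⟩
  rintro ⟨k, u⟩ ⟨l, v⟩ hkl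
  fin_cases k <;> fin_cases l
  all_goals first
    | exact absurd rfl hkl
    | exact TripartiteEdge.adj (.pole _ _ _)
    | exact (TripartiteEdge.adj (.pole _ _ _)).symm
    | exact TripartiteEdge.adj (.cross _ _)
    | exact (TripartiteEdge.adj (.cross _ _)).symm

/-- The positions of the vertices of `K_{2,n,n}` in the double fan: its path meets the vertices of
equal index consecutively. -/
def fanPlacement (n : ℕ) : Fin 2 ⊕ Fin 2 × Fin n → Fin 2 ⊕ ℕ
  | .inl p => .inl p
  | .inr (s, i) => .inr (2 * i + s)

lemma fanPlacement_injective (n : ℕ) : Function.Injective (fanPlacement n) := by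
  rintro (p | ⟨s, i⟩) (q | ⟨t, j⟩) h <;> simp only [fanPlacement] at h <;> grind

/-- The positions of the eight vertices with indices in one block of four on the cube: a cube is
`K_{4,4}` minus a perfect matching, with the sides as colour classes and the vertices of equal index
in antipodal corners. -/
def blockCorner (s : Fin 2) (a : Fin 4) : CubeVertex :=
  ![![.diag 0 0, .inner 3, .inner 1, .diag 2 0], ![.inner 2, .diag 1 0, .diag 3 0, .inner 0]] s a

/-- The face of each cube which receives the vertices `inr (s, i)` outside its block with
`i % 4 = a`. -/
def outsideFace (s : Fin 2) (a : Fin 4) : Fin 4 := ![![0, 0, 2, 2], ![3, 1, 3, 1]] s a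

lemma blockCorner_injective {s t : Fin 2} {a b : Fin 4} (h : blockCorner s a = blockCorner t b) :
    s = t ∧ a = b := by
  revert s t a b
  decide

lemma blockCorner_ne_diag (s : Fin 2) (a k : Fin 4) (m : ℕ) :
    blockCorner s a ≠ .diag k (m + 1) := by
  fin_cases s <;> fin_cases a <;> simp [blockCorner]

lemma outsideFace_injective {s t : Fin 2} {a : Fin 4} (h : outsideFace s a = outsideFace t a) :
    s = t := by
  revert s t a
  decide

/-- The positions of the vertices of `K_{2,n,n}` in the `r`-th filled cube, whose corners are the
block of indices `4 * r, …, 4 * r + 3`. -/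
def cubePlacement (n : ℕ) (r : ℕ) : Fin 2 ⊕ Fin 2 × Fin n → CubeVertex
  | .inl p => .diag 0 (p + 1)
  | .inr (s, i) =>
    if i / 4 = r then blockCorner s (Fin.ofNat 4 i)
    else .diag (outsideFace s (Fin.ofNat 4 i)) (i + 3)

lemma cubePlacement_injective (n r : ℕ) : Function.Injective (cubePlacement n r) := by
  have := @outsideFace_injective
  have := @blockCorner_injective
  have := @blockCorner_ne_diag
  rintro (p | ⟨s, i⟩) (q | ⟨t, j⟩) h <;> simp only [cubePlacement] at h
  · grind
  · grind
  · grind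
  · have mod_eq : Fin.ofNat 4 i = Fin.ofNat 4 j → (i : ℕ) % 4 = j % 4 := congrArg Fin.val
    split_ifs at h <;> grind

lemma blockCorner_adj {a b : Fin 4} (hab : a ≠ b) :
    filledCube.Adj (blockCorner 0 a) (blockCorner 1 b) := by
  have exists_edge : ∀ a b : Fin 4, a ≠ b → ∃ k : Fin 4,
      ∃ e ∈ [CubeEdge.square k, .inward k 0, .outward k 0],
        cubeEnds e = (blockCorner 0 a, blockCorner 1 b) ∨
          cubeEnds e = (blockCorner 1 b, blockCorner 0 a) := by decide
  have hne : blockCorner 0 a ≠ blockCorner 1 b := fun h =>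
    zero_ne_one (blockCorner_injective h).1
  obtain ⟨-, e, -, he | he⟩ := exists_edge a b hab
  · exact graphOfEnds_adj_of_eq e he hne
  · exact (graphOfEnds_adj_of_eq e he hne.symm).symm

/-- Each of two vertices from different blocks is joined to two corners of the cube of the other,
and one of these four corners is the other vertex. -/
lemma blockCorner_mem_face (a b : Fin 4) :
    (blockCorner 0 a = .inner (outsideFace 1 b) ∨
      blockCorner 0 a = .diag (outsideFace 1 b + 1) 0) ∨
    (blockCorner 1 b = .inner (outsideFace 0 a) ∨
      blockCorner 1 b = .diag (outsideFace 0 a + 1) 0) := by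
  revert a b
  decide

/-- The planar layers which together cover `K_{2,n,n}`: one double fan and `p` filled cubes. -/
def tripartiteLayer (n p : ℕ) : Option (Fin p) → SimpleGraph (Fin 2 ⊕ Fin 2 × Fin n)
  | none => doubleFan.comap (fanPlacement n)
  | some r => filledCube.comap (cubePlacement n r)

lemma isPlanar_tripartiteLayer (n p : ℕ) : ∀ o, IsPlanar (tripartiteLayer n p o)
  | none => isPlanar_doubleFan.of_isContained
      ⟨(Embedding.comap ⟨_, fanPlacement_injective n⟩ _).toCopy⟩
  | some r => isPlanar_filledCube.of_isContained
      ⟨(Embedding.comap ⟨_, cubePlacement_injective n r⟩ _).toCopy⟩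

lemma exists_cubePlacement_adj {p : ℕ} (hn : n ≤ 4 * p) {i j : Fin n} (hij : i ≠ j) :
    ∃ r : Fin p,
      filledCube.Adj (cubePlacement n r (.inr (0, i))) (cubePlacement n r (.inr (1, j))) := by
  have div_lt (k : Fin n) : (k : ℕ) / 4 < p := by omega
  by_cases hblock : (i : ℕ) / 4 = j / 4
  · have residue_ne : Fin.ofNat 4 i ≠ Fin.ofNat 4 j := fun h => by
      have : (i : ℕ) % 4 = j % 4 := congrArg Fin.val h
      omega
    refine ⟨⟨i / 4, div_lt i⟩, ?_⟩
    simpa [cubePlacement, ← hblock] using blockCorner_adj residue_ne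
  · rcases blockCorner_mem_face (Fin.ofNat 4 i) (Fin.ofNat 4 j) with h | h
    · refine ⟨⟨i / 4, div_lt i⟩, ?_⟩
      simpa only [cubePlacement, if_true, if_neg (Ne.symm hblock)] using filledCube_adj_diag h _
    · refine ⟨⟨j / 4, div_lt j⟩, ?_⟩
      simpa only [cubePlacement, if_true, if_neg hblock] using (filledCube_adj_diag h _).symm

theorem isUnionOfPlanar_completeMultipartiteGraph {p : ℕ} (hn : n ≤ 4 * p) :
    IsUnionOfPlanar (completeMultipartiteGraph ![Fin 2, Fin n, Fin n]) (p + 1) := by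
  have exists_layer {u v} (huv : TripartiteEdge u v) :
      ∃ o, (tripartiteLayer n p o).Adj u v := by
    obtain ⟨q, s, i⟩ | ⟨i, j⟩ := huv
    · exact ⟨none, doubleFan_adj_spoke q _⟩
    · obtain rfl | hij := eq_or_ne i j
      · exact ⟨none, doubleFan_adj_path _⟩
      · obtain ⟨r, hr⟩ := exists_cubePlacement_adj hn hij
        exact ⟨some r, hr⟩
  have cover {u v} (huv : (tripartiteGraph n).Adj u v) : ∃ o, (tripartiteLayer n p o).Adj u v :=
    huv.2.elim exists_layer fun hvu => (exists_layer hvu).imp fun _ h => h.symm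
  simpa only [Fintype.card_option, Fintype.card_fin] using
    (IsUnionOfPlanar.of_cover (isPlanar_tripartiteLayer n p) cover).of_isContained
      (completeMultipartiteGraph_isContained_tripartiteGraph n)

end Placement

theorem add_one_le_of_isUnionOfPlanar {n p t : ℕ} (hn : 2 ≤ n) (hp : 4 * p ≤ n + 1)
    (h : IsUnionOfPlanar (completeMultipartiteGraph ![Fin 2, Fin n, Fin n]) t) : p + 1 ≤ t := by
  have bipartite : IsUnionOfPlanar (completeBipartiteGraph (Fin n) (Fin n)) t :=
    h.of_isContained (completeBipartiteGraph_isContained_completeMultipartiteGraph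
      ![Fin 2, Fin n, Fin n] (i := 1) (j := 2) (by decide))
  have count := bipartite.mul_add_le (by lia)
  by_contra! hlt
  obtain ⟨m, rfl⟩ : ∃ m, n = m + 1 := ⟨n - 1, by omega⟩
  have : 4 * t * m ≤ (m + 2) * m := Nat.mul_le_mul_right m (by omega)
  linarith

theorem thickness_K2nn_of_mod (n : ℕ) (hn : 1 ≤ n) (h : n % 4 = 0 ∨ n % 4 = 3) :
    (thickness (completeMultipartiteGraph ![Fin 2, Fin n, Fin n]) : ℤ) = ⌈((n : ℚ) + 2) / 4⌉ := by
  obtain ⟨p, hp⟩ : ∃ p, n = 4 * p ∨ n + 1 = 4 * p := ⟨(n + 1) / 4, by omega⟩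
  have isLeast : IsLeast {t | IsUnionOfPlanar (completeMultipartiteGraph ![Fin 2, Fin n, Fin n]) t}
      (p + 1) :=
    ⟨isUnionOfPlanar_completeMultipartiteGraph (by omega),
      fun t ht => add_one_le_of_isUnionOfPlanar (by omega) (by omega) ht⟩
  have thickness_eq : thickness (completeMultipartiteGraph ![Fin 2, Fin n, Fin n]) = p + 1 :=
    isLeast.csInf_eq
  rw [thickness_eq, eq_comm, Int.ceil_eq_iff]
  have : (n : ℚ) = 4 * p ∨ (n : ℚ) + 1 = 4 * p := by exact_mod_cast hp
  push_cast
  constructor <;> cases this <;> linarith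
end

section
/- For every p ≥ 0 there exists a decomposition of the complete tripartite graph K_{1,4p+2,4p+2} into p+1 planar subgraphs; in particular θ(K_{1,4p+2,4p+2}) ≤ p+1. -/
open SimpleGraph

/-!
A graph is planar as soon as its vertices can be ordered along a line so that its edges split into
two families without interlacing edges: draw one family above the line and the other one below it.
Such a two-page drawing survives copying a block of consecutive vertices, placing the copies side by
side, provided that on each page the edges leaving the block all end at one vertex.

In `K_{1,4p+2,4p+2}`, split all but two vertices of each large part into `p` quadruples, matched
between the two parts. The layer of a quadruple is obtained from a fixed two-page drawing on 18
vertices: the eight vertices of the quadruple occur once, and the vertices of the other quadruples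
are arranged in four blocks with one copy for each of them. The edges missed by these `p` layers
form one more graph of this kind, the blow-up of a drawing on 13 vertices.
-/

/-- The relation of a one-page book embedding: with the vertices on a line in the order given by
`pos`, no two edges of `G` interlace, so `G` can be drawn without crossings in a half-plane
bounded by that line. -/
def IsBookPage {V P : Type*} [LT P] (pos : V → P) (G : SimpleGraph V) : Prop :=
  ∀ a b, G.Adj a b → ∀ c d, G.Adj c d → pos a < pos c → pos c < pos b → ¬ pos b < pos d

/-- The parabola over the segment from `a` to `b` on the horizontal axis, scaled by `ε`; the sign
of `ε` selects the half-plane. -/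
noncomputable def parabolicArc (ε a b : ℝ) (t : Set.Icc (0 : ℝ) 1) : ℝ × ℝ :=
  let x := AffineMap.lineMap a b (t : ℝ)
  (x, ε * ((x - a) * (b - x)))

section ParabolicArc

variable {ε ε' a b c d : ℝ}

theorem parabolicArc_of_eq_zero {t : Set.Icc (0 : ℝ) 1} (ht : (t : ℝ) = 0) :
    parabolicArc ε a b t = (a, 0) := by
  simp [parabolicArc, ht]

theorem parabolicArc_of_eq_one {t : Set.Icc (0 : ℝ) 1} (ht : (t : ℝ) = 1) :
    parabolicArc ε a b t = (b, 0) := by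
  simp [parabolicArc, ht]

theorem parabolicArc_snd (t : Set.Icc (0 : ℝ) 1) : (parabolicArc ε a b t).2 =
    ε * (((parabolicArc ε a b t).1 - a) * (b - (parabolicArc ε a b t).1)) :=
  rfl

theorem continuous_parabolicArc : Continuous (parabolicArc ε a b) := by
  unfold parabolicArc
  fun_prop

theorem parabolicArc_injective (hab : a < b) : Function.Injective (parabolicArc ε a b) :=
  fun _ _ h ↦ Subtype.ext (AffineMap.lineMap_injective ℝ hab.ne (Prod.ext_iff.1 h).1)

theorem parabolicArc_fst_mem_Ioo (hab : a < b) {t : Set.Icc (0 : ℝ) 1} (h₀ : (t : ℝ) ≠ 0)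
    (h₁ : (t : ℝ) ≠ 1) : (parabolicArc ε a b t).1 ∈ Set.Ioo a b :=
  ⟨(left_lt_lineMap_iff_lt (t.2.1.lt_of_ne' h₀)).2 hab,
    (lineMap_lt_right_iff_lt (t.2.2.lt_of_ne h₁)).2 hab⟩

theorem parabolicArc_snd_ne_zero (hε : ε ≠ 0) (hab : a < b) {t : Set.Icc (0 : ℝ) 1}
    (h₀ : (t : ℝ) ≠ 0) (h₁ : (t : ℝ) ≠ 1) : (parabolicArc ε a b t).2 ≠ 0 := by
  obtain ⟨ha, hb⟩ := parabolicArc_fst_mem_Ioo (ε := ε) hab h₀ h₁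
  rw [parabolicArc_snd]
  exact mul_ne_zero hε (mul_pos (sub_pos.2 ha) (sub_pos.2 hb)).ne'

theorem eq_or_interlace_of_mul_eq_mul {x : ℝ} (hab : x ∈ Set.Ioo a b) (hcd : x ∈ Set.Ioo c d)
    (h : (x - a) * (b - x) = (x - c) * (d - x)) :
    (a = c ∧ b = d) ∨ (a < c ∧ c < b ∧ b < d) ∨ (c < a ∧ a < d ∧ d < b) := by
  obtain ⟨ha, hb⟩ := hab
  obtain ⟨hc, hd⟩ := hcd
  rcases lt_trichotomy a c with hac | rfl | hca
  · exact .inr (.inl ⟨hac, hc.trans hb, by nlinarith⟩)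
  · have := mul_left_cancel₀ (sub_pos.2 ha).ne' h
    exact .inl ⟨rfl, by linarith⟩
  · exact .inr (.inr ⟨hca, ha.trans hd, by nlinarith⟩)

theorem eq_or_interlace_of_parabolicArc_eq (hε : ε = 1 ∨ ε = -1) (hε' : ε' = 1 ∨ ε' = -1)
    (hab : a < b) (hcd : c < d) {s t : Set.Icc (0 : ℝ) 1}
    (hs₀ : (s : ℝ) ≠ 0) (hs₁ : (s : ℝ) ≠ 1) (ht₀ : (t : ℝ) ≠ 0) (ht₁ : (t : ℝ) ≠ 1)
    (h : parabolicArc ε a b s = parabolicArc ε' c d t) :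
    (a = c ∧ b = d) ∨ ε = ε' ∧ ((a < c ∧ c < b ∧ b < d) ∨ (c < a ∧ a < d ∧ d < b)) := by
  have hs := parabolicArc_fst_mem_Ioo (ε := ε) hab hs₀ hs₁
  have ht := parabolicArc_fst_mem_Ioo (ε := ε') hcd ht₀ ht₁
  rw [← h] at ht
  have hy := congrArg Prod.snd h
  rw [parabolicArc_snd, parabolicArc_snd, ← h] at hy
  set x := (parabolicArc ε a b s).1
  have hs_pos : 0 < (x - a) * (b - x) := mul_pos (sub_pos.2 hs.1) (sub_pos.2 hs.2)
  have ht_pos : 0 < (x - c) * (d - x) := mul_pos (sub_pos.2 ht.1) (sub_pos.2 ht.2)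
  have hεε' : ε = ε' := by
    rcases hε with rfl | rfl <;> rcases hε' with rfl | rfl <;> first | rfl | linarith
  subst hεε'
  have hε₀ : ε ≠ 0 := by rcases hε with rfl | rfl <;> norm_num
  exact (eq_or_interlace_of_mul_eq_mul hs ht (mul_left_cancel₀ hε₀ hy)).imp_right (⟨rfl, ·⟩)

end ParabolicArc

theorem exists_eq_mk_and_pos_lt {V P : Type*} [LinearOrder P] {G : SimpleGraph V} {pos : V → P}
    (hpos : Function.Injective pos) (e : G.edgeSet) :
    ∃ u v : V, (e : Sym2 V) = s(u, v) ∧ pos u < pos v := by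
  obtain ⟨⟨u, v⟩, he⟩ := e
  have huv : G.Adj u v := he
  rcases (hpos.ne huv.ne).lt_or_gt with h | h
  · exact ⟨u, v, rfl, h⟩
  · exact ⟨v, u, Sym2.eq_swap, h⟩

namespace IsBookPage

variable {V P : Type*} {G G₁ G₂ : SimpleGraph V}

theorem isPlanar_of_le_sup_real {pos : V → ℝ} (hpos : Function.Injective pos)
    (h₁ : IsBookPage pos G₁) (h₂ : IsBookPage pos G₂) (hG : G ≤ G₁ ⊔ G₂) : IsPlanar G := by
  classical
  choose u v huv hlt using exists_eq_mk_and_pos_lt (G := G) hpos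
  let ε (e : G.edgeSet) : ℝ := if G₁.Adj (u e) (v e) then 1 else -1
  have hε (e : G.edgeSet) : ε e = 1 ∨ ε e = -1 := by grind
  have hadj (e : G.edgeSet) : G.Adj (u e) (v e) := by
    simpa only [huv, mem_edgeSet] using e.2
  have hpage {e e' : G.edgeSet} (h : ε e = ε e') (hue : pos (u e) < pos (u e'))
      (hev : pos (u e') < pos (v e)) : ¬ pos (v e) < pos (v e') := by
    by_cases he : G₁.Adj (u e) (v e) <;> by_cases he' : G₁.Adj (u e') (v e')
    · exact h₁ _ _ he _ _ he' hue hev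
    · norm_num [ε, he, he'] at h
    · norm_num [ε, he, he'] at h
    · exact h₂ _ _ ((hG (hadj e)).resolve_left he) _ _ ((hG (hadj e')).resolve_left he') hue hev
  refine ⟨fun w ↦ (pos w, 0), fun e ↦ parabolicArc (ε e) (pos (u e)) (pos (v e)),
    fun a b h ↦ hpos (Prod.ext_iff.1 h).1, fun e ↦ continuous_parabolicArc,
    fun e ↦ ⟨u e, v e, huv e, parabolicArc_of_eq_zero rfl, parabolicArc_of_eq_one rfl⟩,
    fun e ↦ parabolicArc_injective (hlt e), fun e t h₀ h₁ w h ↦ ?_, fun e e' hne s t h ↦ ?_⟩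
  · have hε₀ : ε e ≠ 0 := by rcases hε e with h | h <;> norm_num [h]
    exact parabolicArc_snd_ne_zero hε₀ (hlt e) h₀ h₁ (congrArg Prod.snd h)
  · by_cases hs₀ : (s : ℝ) = 0
    · exact ⟨u e, (parabolicArc_of_eq_zero hs₀).symm⟩
    by_cases hs₁ : (s : ℝ) = 1
    · exact ⟨v e, (parabolicArc_of_eq_one hs₁).symm⟩
    by_cases ht₀ : (t : ℝ) = 0
    · exact ⟨u e', h ▸ (parabolicArc_of_eq_zero ht₀).symm⟩
    by_cases ht₁ : (t : ℝ) = 1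
    · exact ⟨v e', h ▸ (parabolicArc_of_eq_one ht₁).symm⟩
    exfalso
    rcases eq_or_interlace_of_parabolicArc_eq (hε e) (hε e') (hlt e) (hlt e') hs₀ hs₁ ht₀ ht₁ h with
      ⟨hu, hv⟩ | ⟨hεε', ⟨h₁, h₂, h₃⟩ | ⟨h₁, h₂, h₃⟩⟩
    · exact hne (Subtype.ext (by rw [huv, huv, hpos hu, hpos hv]))
    · exact hpage hεε' h₁ h₂ h₃
    · exact hpage hεε'.symm h₁ h₂ h₃

theorem isPlanar_of_le_sup [Countable V] [LinearOrder P] {pos : V → P}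
    (hpos : Function.Injective pos) (h₁ : IsBookPage pos G₁) (h₂ : IsBookPage pos G₂)
    (hG : G ≤ G₁ ⊔ G₂) : IsPlanar G := by
  let _ : LinearOrder V := LinearOrder.lift' pos hpos
  obtain ⟨φ⟩ := Order.embedding_from_countable_to_dense V ℝ
  have transfer {H : SimpleGraph V} (hH : IsBookPage pos H) : IsBookPage φ H := by
    intro a b hab c d hcd
    simp only [φ.lt_iff_lt]
    exact hH a b hab c d hcd
  exact isPlanar_of_le_sup_real φ.injective (transfer h₁) (transfer h₂) hG

end IsBookPage

section BlowUp

variable {α β κ V : Type*}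

/-- The blow-up of the template graph `T` on `α`. A vertex `a` lies over the slot `slot a`, the
slots are grouped into blocks, and a block may occur in several copies, `copy a` being the one
that contains `a`. Edges of `T` between different blocks are replaced by complete bipartite graphs,
edges inside a block are kept within each copy. -/
def blowUp (slot : V → α) (block : α → β) (copy : V → κ) (T : SimpleGraph α) :
    SimpleGraph V where
  Adj a b := T.Adj (slot a) (slot b) ∧ (block (slot a) = block (slot b) → copy a = copy b)
  symm := ⟨fun _ _ h ↦ ⟨h.1.symm, fun hb ↦ (h.2 hb.symm).symm⟩⟩
  loopless := ⟨fun _ h ↦ h.1.ne rfl⟩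

/-- The position of a vertex on the spine when the copies of each block are placed consecutively. -/
def blowUpPos (slot : V → α) (block : α → β) (copy : V → κ) (a : V) : β ×ₗ κ ×ₗ α :=
  toLex (block (slot a), toLex (copy a, slot a))

/-- A page `T` of a template in which each block satisfying `repeated` is joined to at most one
slot outside of itself, whose own block is not repeated. This keeps the page free of interlacing
edges when the repeated blocks are copied. -/
structure IsTemplatePage [LT α] (block : α → β) (repeated : β → Prop) (T : SimpleGraph α) :
    Prop where
  isBookPage : IsBookPage id T
  attachment : ∀ s t, T.Adj s t → repeated (block s) → block t ≠ block s →
    ¬ repeated (block t) ∧ ∀ s' t', T.Adj s' t' → block s' = block s → block t' ≠ block s → t' = t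

variable {slot : V → α} {block : α → β} {copy : V → κ} {T T₁ T₂ : SimpleGraph α}
  {repeated : β → Prop}

theorem blowUp_sup : blowUp slot block copy (T₁ ⊔ T₂) =
    blowUp slot block copy T₁ ⊔ blowUp slot block copy T₂ := by
  ext a b
  simp only [blowUp, sup_adj, or_and_right]

theorem blowUpPos_injective (h : ∀ a b, slot a = slot b → copy a = copy b → a = b) :
    Function.Injective (blowUpPos slot block copy) := by
  intro a b hab
  simp only [blowUpPos, EmbeddingLike.apply_eq_iff_eq, Prod.mk.injEq] at hab
  exact h a b hab.2.2 hab.2.1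

theorem blowUpPos_eq_blowUpPos {a b : V} (hslot : slot a = slot b) (hcopy : copy a = copy b) :
    blowUpPos slot block copy a = blowUpPos slot block copy b := by
  simp only [blowUpPos, hslot, hcopy]

theorem IsTemplatePage.eq_of_adj_copies [LT α] (hT : IsTemplatePage block repeated T)
    (hcopy : ∀ a b, block (slot a) = block (slot b) → ¬ repeated (block (slot a)) → copy a = copy b)
    {a b c d : V} (hab : (blowUp slot block copy T).Adj a b)
    (hcd : (blowUp slot block copy T).Adj c d) (hac : block (slot a) = block (slot c))
    (hne : copy a ≠ copy c) (hb : block (slot b) ≠ block (slot a))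
    (hd : block (slot d) ≠ block (slot c)) : slot b = slot d ∧ copy b = copy d := by
  have hrep : repeated (block (slot a)) := by_contra fun h ↦ hne (hcopy a c hac h)
  obtain ⟨hb_rep, huniq⟩ := hT.attachment _ _ hab.1 hrep hb
  have hbd : slot b = slot d := (huniq _ _ hcd.1 hac.symm (hac ▸ hd)).symm
  exact ⟨hbd, hcopy b d (congrArg block hbd) hb_rep⟩

variable [LinearOrder α] [LinearOrder β] [LinearOrder κ]

theorem blowUpPos_lt_iff {a b : V} :
    blowUpPos slot block copy a < blowUpPos slot block copy b ↔
      block (slot a) < block (slot b) ∨ block (slot a) = block (slot b) ∧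
        (copy a < copy b ∨ copy a = copy b ∧ slot a < slot b) := by
  simp only [blowUpPos, Prod.Lex.toLex_lt_toLex]

theorem slot_lt_or_copy_lt_of_blowUpPos_lt (hblock : Monotone block) {a b : V}
    (h : blowUpPos slot block copy a < blowUpPos slot block copy b) :
    slot a < slot b ∨ block (slot a) = block (slot b) ∧ copy a < copy b := by
  rcases blowUpPos_lt_iff.1 h with h | ⟨h, h' | h'⟩
  · exact .inl (hblock.reflect_lt h)
  · exact .inr ⟨h, h'⟩
  · exact .inl h'.2

theorem block_le_of_blowUpPos_lt {a b : V}
    (h : blowUpPos slot block copy a < blowUpPos slot block copy b) :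
    block (slot a) ≤ block (slot b) := by
  rcases blowUpPos_lt_iff.1 h with h | ⟨h, -⟩
  · exact h.le
  · exact h.le

theorem copy_le_of_blowUpPos_lt {a b : V}
    (h : blowUpPos slot block copy a < blowUpPos slot block copy b)
    (hab : block (slot a) = block (slot b)) : copy a ≤ copy b := by
  rcases blowUpPos_lt_iff.1 h with h | ⟨-, h | h⟩
  · exact absurd hab h.ne
  · exact h.le
  · exact h.1.le

theorem IsTemplatePage.isBookPage_blowUp (hT : IsTemplatePage block repeated T)
    (hblock : Monotone block)
    (hcopy : ∀ a b, block (slot a) = block (slot b) → ¬ repeated (block (slot a)) →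
      copy a = copy b) :
    IsBookPage (blowUpPos slot block copy) (blowUp slot block copy T) := by
  intro a b hab c d hcd hac hcb hbd
  have hac_le := block_le_of_blowUpPos_lt hac
  have hcb_le := block_le_of_blowUpPos_lt hcb
  have hbd_le := block_le_of_blowUpPos_lt hbd
  rcases slot_lt_or_copy_lt_of_blowUpPos_lt hblock hac with hac_slot | ⟨hac_block, hlt⟩
  · rcases slot_lt_or_copy_lt_of_blowUpPos_lt hblock hcb with hcb_slot | ⟨hcb_block, hlt⟩
    · rcases slot_lt_or_copy_lt_of_blowUpPos_lt hblock hbd with hbd_slot | ⟨hbd_block, hlt⟩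
      · exact hT.isBookPage _ _ hab.1 _ _ hcd.1 hac_slot hcb_slot hbd_slot
      · -- `b` and `d` lie in different copies of one block, hence `a` and `c` coincide.
        have hc : block (slot c) ≠ block (slot d) := fun h ↦
          (copy_le_of_blowUpPos_lt hcb (h.trans hbd_block.symm)).not_gt (hcd.2 h ▸ hlt)
        have ha : block (slot a) ≠ block (slot b) := fun h ↦
          hc ((hcb_le.antisymm (h ▸ hac_le)).trans hbd_block)
        obtain ⟨hs, hk⟩ :=
          hT.eq_of_adj_copies hcopy hab.symm hcd.symm hbd_block hlt.ne ha hc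
        exact hac.ne (blowUpPos_eq_blowUpPos hs hk)
    · -- `c` and `b` lie in different copies of one block, hence `a` and `d` lie over one slot.
      have ha : block (slot a) ≠ block (slot b) := fun h ↦
        (copy_le_of_blowUpPos_lt hac (h.trans hcb_block.symm)).not_gt (hab.2 h ▸ hlt)
      have hd : block (slot d) ≠ block (slot c) := fun h ↦
        (copy_le_of_blowUpPos_lt hbd (hcb_block.symm.trans h.symm)).not_gt (hcd.2 h.symm ▸ hlt)
      obtain ⟨hs, -⟩ := hT.eq_of_adj_copies hcopy hab.symm hcd hcb_block.symm hlt.ne' ha hd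
      exact ha (hac_le.trans hcb_le |>.antisymm (hs ▸ hbd_le))
  · -- `a` and `c` lie in different copies of one block, hence `b` and `d` coincide.
    have hb : block (slot b) ≠ block (slot a) := fun h ↦
      (copy_le_of_blowUpPos_lt hcb (hac_block.symm.trans h.symm)).not_gt (hab.2 h.symm ▸ hlt)
    have hd : block (slot d) ≠ block (slot c) := fun h ↦
      hb ((hbd_le.trans (h.trans hac_block.symm).le).antisymm (hac_le.trans hcb_le))
    obtain ⟨hs, hk⟩ := hT.eq_of_adj_copies hcopy hab hcd hac_block hlt.ne hb hd
    exact hbd.ne (blowUpPos_eq_blowUpPos hs hk)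

theorem isPlanar_of_le_blowUp [Countable V] {G : SimpleGraph V}
    (h₁ : IsTemplatePage block repeated T₁) (h₂ : IsTemplatePage block repeated T₂)
    (hblock : Monotone block)
    (hcopy : ∀ a b, block (slot a) = block (slot b) → ¬ repeated (block (slot a)) → copy a = copy b)
    (hinj : ∀ a b, slot a = slot b → copy a = copy b → a = b)
    (hG : G ≤ blowUp slot block copy (T₁ ⊔ T₂)) : IsPlanar G :=
  (h₁.isBookPage_blowUp hblock hcopy).isPlanar_of_le_sup (blowUpPos_injective hinj)
    (h₂.isBookPage_blowUp hblock hcopy) (hG.trans_eq blowUp_sup)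

end BlowUp

/-- Vertices of `K_{1,4p+2,4p+2}`. The parts of size `4p+2` consist of `p` quadruples and two
exceptional vertices each: `u i q` and `x i` in one part, `v j q` and `y j` in the other, where `q`
is the index of the quadruple. -/
inductive QuadVertex (p : ℕ) : Type
  | hub
  | u (i : Fin 4) (q : Fin p)
  | x (i : Fin 2)
  | v (j : Fin 4) (q : Fin p)
  | y (j : Fin 2)
  deriving Fintype

namespace QuadVertex

variable {p : ℕ}

/-- The part of the tripartition that contains a vertex. -/
def part : QuadVertex p → Fin 3
  | hub => 0
  | u _ _ | x _ => 1
  | v _ _ | y _ => 2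

/-- The identification of the vertices of `K_{1,4p+2,4p+2}` with `QuadVertex p`. -/
def ofSigma : (Σ i, ![Fin 1, Fin (4 * p + 2), Fin (4 * p + 2)] i) → QuadVertex p
  | ⟨0, _⟩ => hub
  | ⟨1, k⟩ => Sum.elim (fun a ↦ u a.1 a.2) x (quadEquiv p k)
  | ⟨2, k⟩ => Sum.elim (fun a ↦ v a.1 a.2) y (quadEquiv p k)
where
  /-- The splitting of a part of size `4p+2` into `p` quadruples and two exceptional vertices. -/
  quadEquiv (p : ℕ) : Fin (4 * p + 2) ≃ Fin 4 × Fin p ⊕ Fin 2 :=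
    finSumFinEquiv.symm.trans (finProdFinEquiv.symm.sumCongr (Equiv.refl _))

theorem part_ofSigma (a : Σ i, ![Fin 1, Fin (4 * p + 2), Fin (4 * p + 2)] i) :
    (ofSigma a).part = a.1 := by
  obtain ⟨i, k⟩ := a
  fin_cases i
  · rfl
  · rcases h : ofSigma.quadEquiv p k with a | a <;> simp [ofSigma, h, part]
  · rcases h : ofSigma.quadEquiv p k with a | a <;> simp [ofSigma, h, part]

theorem ofSigma_injective : Function.Injective (ofSigma (p := p)) := by
  intro a b hab
  have hpart : a.1 = b.1 := by rw [← part_ofSigma, ← part_ofSigma, hab]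
  obtain ⟨i, k⟩ := a
  obtain ⟨j, l⟩ := b
  obtain rfl : i = j := hpart
  congr 1
  have helim {f : Fin 4 × Fin p → QuadVertex p} {g : Fin 2 → QuadVertex p}
      (hf : Function.Injective f) (hg : Function.Injective g) (hfg : ∀ a b, f a ≠ g b) :
      Function.Injective fun k ↦ Sum.elim f g (ofSigma.quadEquiv p k) :=
    (hf.sumElim hg hfg).comp (Equiv.injective _)
  fin_cases i
  · exact Subsingleton.elim (α := Fin 1) k l
  · exact helim (fun _ _ h ↦ by simpa [Prod.ext_iff] using h) (fun _ _ h ↦ by simpa using h)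
      (by simp) hab
  · exact helim (fun _ _ h ↦ by simpa [Prod.ext_iff] using h) (fun _ _ h ↦ by simpa using h)
      (by simp) hab

end QuadVertex

section QuadLayer

/-- The upper page of the template for the layer of a quadruple `r`. The slots `0, …, 17` stand for
`u₀ y₀ {V₀ V₁} y₁ u₁ v₂ {U₀ U₁} v₃ u₃ {V₂ V₃} u₂ v₀ {U₂ U₃} v₁`, where capitals denote vertices of
the other quadruples and braces the blocks having one copy for each of these. The vertices `x₀`,
`hub` and `x₁` lie over the slots of `U₀`, `V₂` and `U₂`, in a copy of their own. -/
abbrev quadTop : SimpleGraph (Fin 18) :=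
  .fromRel fun s t ↦ t ∈ neighbors s
where
  /-- The neighbours of a slot that lie to its right. -/
  neighbors : Fin 18 → List (Fin 18) :=
    ![[1, 14], [5, 10, 13], [5], [5], [], [6], [7, 8, 10], [], [], [10], [], [13], [13], [14],
      [15, 16], [], [], []]

/-- The lower page of the template for the layer of a quadruple. -/
abbrev quadBottom : SimpleGraph (Fin 18) :=
  .fromRel fun s t ↦ t ∈ neighbors s
where
  /-- The neighbours of a slot that lie to its right. -/
  neighbors : Fin 18 → List (Fin 18) :=
    ![[2, 3, 4, 17], [], [], [], [5, 10, 13], [9], [], [9], [9], [], [11, 12], [], [], [17], [],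
      [17], [17], []]

/-- The block of a slot, named by its leftmost slot. -/
def quadBlock : Fin 18 → Fin 18 := ![0, 1, 2, 2, 4, 5, 6, 7, 7, 9, 10, 11, 11, 13, 14, 15, 15, 17]

/-- The blocks that have a copy for each of the other quadruples. -/
abbrev quadRepeated (b : Fin 18) : Prop := b ∈ [2, 7, 11, 15]

theorem isTemplatePage_quadTop : IsTemplatePage quadBlock quadRepeated quadTop where
  isBookPage := by unfold IsBookPage; decide +kernel
  attachment := by decide +kernel

theorem isTemplatePage_quadBottom : IsTemplatePage quadBlock quadRepeated quadBottom where
  isBookPage := by unfold IsBookPage; decide +kernel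
  attachment := by decide +kernel

theorem monotone_quadBlock : Monotone quadBlock := by unfold Monotone; decide

variable {p : ℕ} (r : Fin p)

/-- The slot of a vertex in the layer of the quadruple `r`. -/
def quadSlot : QuadVertex p → Fin 18
  | .hub => 11
  | .u i q => if q = r then ![0, 5, 13, 10] i else ![7, 8, 15, 16] i
  | .x i => ![7, 15] i
  | .v j q => if q = r then ![14, 17, 6, 9] j else ![2, 3, 11, 12] j
  | .y j => ![1, 4] j

/-- The copy of its block to which a vertex belongs in the layer of the quadruple `r`; the copy `⊥`
is used for everything outside of the other quadruples. -/
def quadCopy : QuadVertex p → WithBot (Fin p)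
  | .u _ q | .v _ q => if q = r then ⊥ else q
  | _ => ⊥

/-- The layer of the quadruple `r`. -/
def quadLayer : SimpleGraph (QuadVertex p) :=
  blowUp (quadSlot r) quadBlock (quadCopy r) (quadTop ⊔ quadBottom)

theorem quadCopy_of_not_repeated (a : QuadVertex p)
    (ha : ¬ quadRepeated (quadBlock (quadSlot r a))) : quadCopy r a = ⊥ := by
  have hu (i : Fin 4) : quadRepeated (quadBlock (![7, 8, 15, 16] i)) := by decide +revert
  have hv (j : Fin 4) : quadRepeated (quadBlock (![2, 3, 11, 12] j)) := by decide +revert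
  rcases a with _ | ⟨i, q⟩ | i | ⟨j, q⟩ | j <;> simp only [quadCopy, quadSlot] at *
  · exact if_pos (by_contra fun hq ↦ ha (if_neg hq ▸ hu i))
  · exact if_pos (by_contra fun hq ↦ ha (if_neg hq ▸ hv j))

theorem eq_of_quadSlot_eq (a b : QuadVertex p) (hslot : quadSlot r a = quadSlot r b)
    (hcopy : quadCopy r a = quadCopy r b) : a = b := by
  rcases a with _ | ⟨i, q⟩ | i | ⟨j, q⟩ | j <;> rcases b with _ | ⟨i', q'⟩ | i' | ⟨j', q'⟩ | j' <;>
    simp only [quadSlot, quadCopy] at hslot hcopy <;> (try split_ifs at hslot hcopy) <;>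
    first
    | exact absurd hslot (by decide +revert)
    | cases hcopy <;> simp_all only [QuadVertex.u.injEq, QuadVertex.v.injEq, QuadVertex.x.injEq,
        QuadVertex.y.injEq, and_true] <;> decide +revert

end QuadLayer

section HubLayer

/-- The upper page of the template for the hub layer. The slots `0, …, 12` stand for
`y₀ x₀ {v₀ u₁ u₃ v₁} hub {v₂ u₀ u₂ v₃} x₁ y₁`, where braces denote the blocks having one copy for
each quadruple. -/
abbrev hubTop : SimpleGraph (Fin 13) :=
  .fromRel fun s t ↦ t ∈ neighbors s
where
  /-- The neighbours of a slot that lie to its right. -/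
  neighbors : Fin 13 → List (Fin 13) :=
    ![[1], [2, 5, 6, 12], [3, 4], [], [5], [], [12], [8, 9, 11], [], [10], [11], [12], []]

/-- The lower page of the template for the hub layer. -/
abbrev hubBottom : SimpleGraph (Fin 13) :=
  .fromRel fun s t ↦ t ∈ neighbors s
where
  /-- The neighbours of a slot that lie to its right. -/
  neighbors : Fin 13 → List (Fin 13) :=
    ![[6, 11], [], [6], [5, 6], [], [6], [7, 8, 10, 11], [], [10], [], [], [], []]

/-- The block of a slot, named by its leftmost slot. -/
def hubBlock : Fin 13 → Fin 13 := ![0, 1, 2, 2, 2, 2, 6, 7, 7, 7, 7, 11, 12]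

/-- The blocks that have a copy for each quadruple. -/
abbrev hubRepeated (b : Fin 13) : Prop := b ∈ [2, 7]

theorem isTemplatePage_hubTop : IsTemplatePage hubBlock hubRepeated hubTop where
  isBookPage := by unfold IsBookPage; decide +kernel
  attachment := by decide +kernel

theorem isTemplatePage_hubBottom : IsTemplatePage hubBlock hubRepeated hubBottom where
  isBookPage := by unfold IsBookPage; decide +kernel
  attachment := by decide +kernel

theorem monotone_hubBlock : Monotone hubBlock := by unfold Monotone; decide

variable {p : ℕ}

/-- The slot of a vertex in the hub layer. -/
def hubSlot : QuadVertex p → Fin 13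
  | .hub => 6
  | .u i _ => ![8, 3, 9, 4] i
  | .x i => ![1, 11] i
  | .v j _ => ![2, 5, 7, 10] j
  | .y j => ![0, 12] j

/-- The copy of its block to which a vertex belongs in the hub layer. -/
def hubCopy : QuadVertex p → WithBot (Fin p)
  | .u _ q | .v _ q => q
  | _ => ⊥

/-- The layer that contains the edges missed by the layers of the quadruples. -/
def hubLayer (p : ℕ) : SimpleGraph (QuadVertex p) :=
  blowUp hubSlot hubBlock hubCopy (hubTop ⊔ hubBottom)

theorem hubCopy_of_not_repeated (a : QuadVertex p)
    (ha : ¬ hubRepeated (hubBlock (hubSlot a))) : hubCopy a = ⊥ := by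
  rcases a with _ | ⟨i, q⟩ | i | ⟨j, q⟩ | j <;> simp only [hubCopy, hubSlot] at *
  · exact absurd (by decide +revert) ha
  · exact absurd (by decide +revert) ha

theorem eq_of_hubSlot_eq (a b : QuadVertex p) (hslot : hubSlot a = hubSlot b)
    (hcopy : hubCopy a = hubCopy b) : a = b := by
  rcases a with _ | ⟨i, q⟩ | i | ⟨j, q⟩ | j <;> rcases b with _ | ⟨i', q'⟩ | i' | ⟨j', q'⟩ | j' <;>
    simp only [hubSlot, hubCopy] at hslot hcopy <;>
    first
    | exact absurd hslot (by decide +revert)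
    | (cases hcopy
       simp_all only [QuadVertex.u.injEq, QuadVertex.v.injEq, QuadVertex.x.injEq,
        QuadVertex.y.injEq, and_true] <;> decide +revert)

end HubLayer

section Cover

variable {p : ℕ}

theorem hubLayer_adj_hub_u {i : Fin 4} (hi : i < 2) (q : Fin p) :
    (hubLayer p).Adj .hub (.u i q) := by
  simp only [hubLayer, blowUp, hubSlot]
  refine ⟨?_, fun h ↦ absurd h ?_⟩ <;> decide +revert

theorem quadLayer_adj_hub_u {i : Fin 4} (hi : 2 ≤ i) (q : Fin p) :
    (quadLayer q).Adj .hub (.u i q) := by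
  simp only [quadLayer, blowUp, quadSlot, if_true]
  refine ⟨?_, fun h ↦ absurd h ?_⟩ <;> decide +revert

theorem hubLayer_adj_hub_x (i : Fin 2) : (hubLayer p).Adj .hub (.x i) := by
  simp only [hubLayer, blowUp, hubSlot]
  refine ⟨?_, fun h ↦ absurd h ?_⟩ <;> decide +revert

theorem hubLayer_adj_hub_v (j : Fin 4) (q : Fin p) : (hubLayer p).Adj .hub (.v j q) := by
  simp only [hubLayer, blowUp, hubSlot]
  refine ⟨?_, fun h ↦ absurd h ?_⟩ <;> decide +revert

theorem hubLayer_adj_hub_y (j : Fin 2) : (hubLayer p).Adj .hub (.y j) := by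
  simp only [hubLayer, blowUp, hubSlot]
  refine ⟨?_, fun h ↦ absurd h ?_⟩ <;> decide +revert

theorem hubLayer_adj_x_y (i j : Fin 2) : (hubLayer p).Adj (.x i) (.y j) := by
  simp only [hubLayer, blowUp, hubSlot]
  refine ⟨?_, fun h ↦ absurd h ?_⟩ <;> decide +revert

theorem quadLayer_adj_u_y (i : Fin 4) (j : Fin 2) (q : Fin p) :
    (quadLayer q).Adj (.u i q) (.y j) := by
  simp only [quadLayer, blowUp, quadSlot, if_true]
  refine ⟨?_, fun h ↦ absurd h ?_⟩ <;> decide +revert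

theorem hubLayer_adj_x_v {i : Fin 2} {j : Fin 4} (h : i = 0 ↔ j < 2) (q : Fin p) :
    (hubLayer p).Adj (.x i) (.v j q) := by
  simp only [hubLayer, blowUp, hubSlot]
  refine ⟨?_, fun h ↦ absurd h ?_⟩ <;> decide +revert

theorem quadLayer_adj_x_v {i : Fin 2} {j : Fin 4} (h : ¬ (i = 0 ↔ j < 2)) (q : Fin p) :
    (quadLayer q).Adj (.x i) (.v j q) := by
  simp only [quadLayer, blowUp, quadSlot, if_true]
  refine ⟨?_, fun h ↦ absurd h ?_⟩ <;> decide +revert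

theorem quadLayer_adj_u_v {i j : Fin 4} (h : i % 2 = 0 ↔ j < 2) (q : Fin p) :
    (quadLayer q).Adj (.u i q) (.v j q) := by
  simp only [quadLayer, blowUp, quadSlot, if_true]
  refine ⟨?_, fun h ↦ absurd h ?_⟩ <;> decide +revert

theorem hubLayer_adj_u_v {i j : Fin 4} (h : ¬ (i % 2 = 0 ↔ j < 2)) (q : Fin p) :
    (hubLayer p).Adj (.u i q) (.v j q) := by
  simp only [hubLayer, blowUp, hubSlot, hubCopy, implies_true, and_true]
  decide +revert

theorem quadLayer_adj_u_foreign_v {i j : Fin 4} (h : i < 2 ↔ j < 2) {q q' : Fin p} (hq : q' ≠ q) :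
    (quadLayer q).Adj (.u i q) (.v j q') := by
  simp only [quadLayer, blowUp, quadSlot, if_true, if_neg hq]
  refine ⟨?_, fun h ↦ absurd h ?_⟩ <;> decide +revert

theorem quadLayer_adj_foreign_u_v {i j : Fin 4} (h : ¬ (i < 2 ↔ j < 2)) {q q' : Fin p}
    (hq : q' ≠ q) : (quadLayer q).Adj (.u i q') (.v j q) := by
  simp only [quadLayer, blowUp, quadSlot, if_true, if_neg hq]
  refine ⟨?_, fun h ↦ absurd h ?_⟩ <;> decide +revert

end Cover

section Layers

variable {p : ℕ} {V : Type*} {G : SimpleGraph V} {f : V → QuadVertex p}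

theorem isPlanar_of_le_comap_quadLayer (r : Fin p) (hf : Function.Injective f)
    (hG : G ≤ (quadLayer r).comap f) : IsPlanar G := by
  have := hf.countable
  refine isPlanar_of_le_blowUp (slot := quadSlot r ∘ f) (copy := quadCopy r ∘ f)
    isTemplatePage_quadTop isTemplatePage_quadBottom monotone_quadBlock
    (fun a b hab ha ↦ ?_) (fun a b hslot hcopy ↦ hf (eq_of_quadSlot_eq r _ _ hslot hcopy)) hG
  exact (quadCopy_of_not_repeated r _ ha).trans (quadCopy_of_not_repeated r _ (hab ▸ ha)).symm

theorem isPlanar_of_le_comap_hubLayer (hf : Function.Injective f)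
    (hG : G ≤ (hubLayer p).comap f) : IsPlanar G := by
  have := hf.countable
  refine isPlanar_of_le_blowUp (slot := hubSlot ∘ f) (copy := hubCopy ∘ f)
    isTemplatePage_hubTop isTemplatePage_hubBottom monotone_hubBlock
    (fun a b hab ha ↦ ?_) (fun a b hslot hcopy ↦ hf (eq_of_hubSlot_eq _ _ hslot hcopy)) hG
  exact (hubCopy_of_not_repeated _ ha).trans (hubCopy_of_not_repeated _ (hab ▸ ha)).symm

theorem hubLayer_adj_or_exists_quadLayer_adj {a b : QuadVertex p} (h : a.part < b.part) :
    (hubLayer p).Adj a b ∨ ∃ r, (quadLayer r).Adj a b := by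
  rcases a with _ | ⟨i, q⟩ | i | ⟨i, q⟩ | i <;> rcases b with _ | ⟨j, q'⟩ | j | ⟨j, q'⟩ | j <;>
    try (simp [QuadVertex.part] at h; done)
  case hub.u =>
    rcases lt_or_ge j 2 with hj | hj
    · exact .inl (hubLayer_adj_hub_u hj q')
    · exact .inr ⟨q', quadLayer_adj_hub_u hj q'⟩
  case hub.x => exact .inl (hubLayer_adj_hub_x j)
  case hub.v => exact .inl (hubLayer_adj_hub_v j q')
  case hub.y => exact .inl (hubLayer_adj_hub_y j)
  case u.v =>
    rcases eq_or_ne q q' with rfl | hq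
    · by_cases hij : i % 2 = 0 ↔ j < 2
      · exact .inr ⟨q, quadLayer_adj_u_v hij q⟩
      · exact .inl (hubLayer_adj_u_v hij q)
    · by_cases hij : i < 2 ↔ j < 2
      · exact .inr ⟨q, quadLayer_adj_u_foreign_v hij hq.symm⟩
      · exact .inr ⟨q', quadLayer_adj_foreign_u_v hij hq⟩
  case u.y => exact .inr ⟨q, quadLayer_adj_u_y i j q⟩
  case x.v =>
    by_cases hij : i = 0 ↔ j < 2
    · exact .inl (hubLayer_adj_x_v hij q')
    · exact .inr ⟨q', quadLayer_adj_x_v hij q'⟩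
  case x.y => exact .inl (hubLayer_adj_x_y i j)

/-- The `p + 1` planar layers of the decomposition: one for each quadruple and the hub layer. -/
def layer (p : ℕ) : Fin (p + 1) → SimpleGraph (QuadVertex p) :=
  Fin.lastCases (hubLayer p) quadLayer

theorem isPlanar_of_le_comap_layer (k : Fin (p + 1)) (hf : Function.Injective f)
    (hG : G ≤ (layer p k).comap f) : IsPlanar G := by
  induction k using Fin.lastCases with
  | last =>
    rw [layer, Fin.lastCases_last] at hG
    exact isPlanar_of_le_comap_hubLayer hf hG
  | cast r =>
    rw [layer, Fin.lastCases_castSucc] at hG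
    exact isPlanar_of_le_comap_quadLayer r hf hG

theorem exists_layer_adj {a b : QuadVertex p} (h : a.part ≠ b.part) :
    ∃ k, (layer p k).Adj a b := by
  wlog hab : a.part < b.part generalizing a b
  · exact (this h.symm (h.symm.lt_of_le (not_lt.1 hab))).imp fun _ ↦ .symm
  rcases hubLayer_adj_or_exists_quadLayer_adj hab with h | ⟨r, h⟩
  · exact ⟨Fin.last p, by simpa only [layer, Fin.lastCases_last] using h⟩
  · exact ⟨r.castSucc, by simpa only [layer, Fin.lastCases_castSucc] using h⟩

end Layers

theorem planar_decomposition_K1_4p2 (p : ℕ) :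
    (∃ H : Fin (p + 1) → SimpleGraph (Σ i, ![Fin 1, Fin (4 * p + 2), Fin (4 * p + 2)] i),
      (∀ i, H i ≤ completeMultipartiteGraph ![Fin 1, Fin (4 * p + 2), Fin (4 * p + 2)]) ∧
      (∀ i, IsPlanar (H i)) ∧
      (⨆ i, H i) = completeMultipartiteGraph ![Fin 1, Fin (4 * p + 2), Fin (4 * p + 2)]) ∧
    thickness (completeMultipartiteGraph ![Fin 1, Fin (4 * p + 2), Fin (4 * p + 2)]) ≤ p + 1 := by
  set K := completeMultipartiteGraph ![Fin 1, Fin (4 * p + 2), Fin (4 * p + 2)]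
  have cover {a b} (hab : K.Adj a b) : ∃ k, ((layer p k).comap QuadVertex.ofSigma).Adj a b :=
    exists_layer_adj (by rwa [QuadVertex.part_ofSigma, QuadVertex.part_ofSigma])
  have decomposition : ∃ H : Fin (p + 1) → SimpleGraph _,
      (∀ k, H k ≤ K) ∧ (∀ k, IsPlanar (H k)) ∧ (⨆ k, H k) = K := by
    refine ⟨fun k ↦ K ⊓ (layer p k).comap QuadVertex.ofSigma, fun k ↦ inf_le_left,
      fun k ↦ isPlanar_of_le_comap_layer k QuadVertex.ofSigma_injective inf_le_right,
      le_antisymm (iSup_le fun k ↦ inf_le_left) fun a b hab ↦ ?_⟩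
    exact SimpleGraph.iSup_adj.2 ((cover hab).imp fun k hk ↦ ⟨hab, hk⟩)
  exact ⟨decomposition, Nat.sInf_le decomposition⟩
end
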